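/- There exists a constant C > 0 such that for every integer n ≥ 16 and every integer A with log₂ n ≤ A ≤ n, every tree of size n has a straight-line planar grid drawing of some width W ≤ C·A and height H ≤ (n/A)·2^{C·√(log₂ A · log₂ log₂ A)}. -/

import Mathlib

open SimpleGraph

/-- A straight-line planar drawing of a graph `G`: an injective map of vertices to points of
`ℝ²` such that no vertex lies in the interior of (or on) a non-incident edge segment, and any
two distinct edge segments intersect exactly in the images of their common endpoints. -/
def IsStraightLineDrawing {V : Type} (G : SimpleGraph V) (f : V → ℝ × ℝ) : Prop :=
  Function.Injective f ∧
  (∀ u v w : V, G.Adj u v → w ≠ u → w ≠ v → f w ∉ segment ℝ (f u) (f v)) ∧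
  (∀ u v u' v' : V, G.Adj u v → G.Adj u' v' → s(u, v) ≠ s(u', v') →
    segment ℝ (f u) (f v) ∩ segment ℝ (f u') (f v') =
      f '' {w | (w = u ∨ w = v) ∧ (w = u' ∨ w = v')})

/-- A grid drawing of width `W` and height `H`: a straight-line planar drawing with all
vertices on integer grid points of `{1, …, W} × {1, …, H}`. -/
def IsGridDrawing {V : Type} (G : SimpleGraph V) (f : V → ℝ × ℝ) (W H : ℕ) : Prop :=
  IsStraightLineDrawing G f ∧
  ∀ x : V, ∃ i j : ℤ, 1 ≤ i ∧ i ≤ (W : ℤ) ∧ 1 ≤ j ∧ j ≤ (H : ℤ) ∧ f x = ((i : ℝ), (j : ℝ))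

/-- In a tree with distinguished root `r`, `u` is the parent of `v` iff `u` is a neighbor of
`v` lying on the path from `v` to `r` (equivalently, one step closer to the root). -/
def IsParent {V : Type} (G : SimpleGraph V) (r u v : V) : Prop :=
  G.Adj u v ∧ G.dist r u + 1 = G.dist r v

/-- A drawing is upward (w.r.t. root `r`) if every parent is drawn at a `y`-coordinate
greater than or equal to that of each of its children. -/
def IsUpward {V : Type} (G : SimpleGraph V) (r : V) (f : V → ℝ × ℝ) : Prop :=
  ∀ u v : V, IsParent G r u v → (f v).2 ≤ (f u).2

/-!
The tree is rooted, and each vertex `w` other than the root is charged with the half-open edge from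
its parent (excluded) to `w` (included). A map of the vertices into the plane is a straight-line
planar drawing as soon as these half-open edges are pairwise disjoint and avoid the root. Drawings
of subtrees can therefore be transported by injective affine lattice maps and superimposed in
disjoint zones (`Draw.place`, `Placed.union`).

The height is controlled by a recursion on the width. `Good T L w F` says that for all `A ≤ w` a
subtree of size `s` fits into width `4 A` and height about `(s / A + 1) F`, where `L` bounds the
logarithms that occur; `good_step` derives `Good T L (b w) (O(L² F))` from it. Beginning with `w = 1`
and taking `b ≈ 2 ^ √(log A · log log A)`, width `A` is reached after about `√(log A / log log A)`
levels, each of which multiplies the height by `O(log² A)`; this gives the exponent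
`O(√(log A · log log A))` (`good_iterate`, `parameters`).

A step of the recursion has two parts. The first one, `star`, draws next to a vertex `v` all its
subtrees of size at most `A`. Those of size at least `A / b` are few: they are stacked below one
another, each in `L + 1` rows, by the layout `small` that continues the largest subtree horizontally.
The others have size less than `w`, so by `Good T L w F` a subtree of size `s` fits into a square of
side `O(√(s F))` (`exists_square`). Such a square is carried by a unimodular map into the cone
between two consecutive Farey fractions as seen from `v` (`place_cone`). As the fractions of
denominator at most `M` have `∑_{y ≤ M} φ(y) ≥ M² / 16` representatives modulo `1`
(`sum_totient_ge`), many squares fit into a sector of directions whose area is only a constant times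
their total area (`farey`). Squares of about the same side share a sector, and the `L` sectors
obtained in this way, together with a row of boxes for subtrees whose squares are too large, form the
drawing of the star (`classes`, `star_light`).

The second part draws the vertices whose subtrees have size larger than `A`. The potential
`2 s / A - 1` of `Tower` leaves room for one star at each branching vertex and for one after each `A`
vertices. Between these places the path of heavy subtrees runs along a row of width `A`, all light
subtrees hanging below it in `L + 1` rows by the layout `small` (`path_row`). At a branching vertex
all heavy subtrees but a largest one are moved by one column to the right, which happens at most
`log s` times (`star_heavy`).
-/

/-! ### Rooted trees -/

namespace TreeDraw

/-- A finite rooted tree given by its parent map; `dep` witnesses that iterating `par` reaches the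
root, which is its own parent. -/
structure RTree (V : Type) where
  root : V
  par : V → V
  dep : V → ℕ
  par_root : par root = root
  dep_par : ∀ v, v ≠ root → dep (par v) < dep v

namespace RTree

variable {V : Type} [Fintype V] [DecidableEq V] (T : RTree V)

open Classical in
/-- The vertex set of the subtree rooted at `v`. -/
noncomputable def desc (v : V) : Finset V :=
  Finset.univ.filter fun w => ∃ k : ℕ, T.par^[k] w = v

/-- The children of `v`. -/
def kids (v : V) : Finset V := Finset.univ.filter fun w => w ≠ T.root ∧ T.par w = v

/-- The number of vertices of the subtree rooted at `v`. -/
noncomputable def sz (v : V) : ℕ := (T.desc v).card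

omit [DecidableEq V] in
theorem mem_desc {v w : V} : w ∈ T.desc v ↔ ∃ k : ℕ, T.par^[k] w = v := by simp [desc]

theorem mem_kids {v w : V} : w ∈ T.kids v ↔ w ≠ T.root ∧ T.par w = v := by simp [kids]

omit [DecidableEq V] in
theorem self_mem (v : V) : v ∈ T.desc v := T.mem_desc.2 ⟨0, rfl⟩

omit [Fintype V] [DecidableEq V] in
theorem dep_par_le (v : V) : T.dep (T.par v) ≤ T.dep v := by
  by_cases h : v = T.root
  · rw [h, T.par_root]
  · exact (T.dep_par v h).le

omit [Fintype V] [DecidableEq V] in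
theorem dep_iter (k : ℕ) (v : V) : T.dep (T.par^[k] v) ≤ T.dep v := by
  induction k generalizing v with
  | zero => exact le_rfl
  | succ k ih =>
    rw [Function.iterate_succ_apply]
    exact (ih _).trans (T.dep_par_le v)

omit [Fintype V] [DecidableEq V] in
theorem iter_root (k : ℕ) : T.par^[k] T.root = T.root := by
  induction k with
  | zero => rfl
  | succ k ih => rw [Function.iterate_succ_apply, T.par_root, ih]

omit [DecidableEq V] in
theorem ne_root_of_mem {v w : V} (h : w ∈ T.desc v) (hne : w ≠ v) : w ≠ T.root := by
  rintro rfl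
  obtain ⟨k, hk⟩ := T.mem_desc.1 h
  exact hne (by rw [← hk, T.iter_root])

omit [DecidableEq V] in
theorem par_mem {v w : V} (h : w ∈ T.desc v) (hne : w ≠ v) : T.par w ∈ T.desc v := by
  obtain ⟨k, hk⟩ := T.mem_desc.1 h
  cases k with
  | zero => exact absurd hk hne
  | succ k => exact T.mem_desc.2 ⟨k, by rwa [Function.iterate_succ_apply] at hk⟩

theorem kid_desc_subset {v c : V} (hc : c ∈ T.kids v) : T.desc c ⊆ T.desc v := by
  intro w hw
  obtain ⟨k, hk⟩ := T.mem_desc.1 hw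
  refine T.mem_desc.2 ⟨k + 1, ?_⟩
  rw [Function.iterate_succ_apply', hk, (T.mem_kids.1 hc).2]

theorem not_mem_kid_desc {v c : V} (hc : c ∈ T.kids v) : v ∉ T.desc c := by
  intro hv
  obtain ⟨k, hk⟩ := T.mem_desc.1 hv
  have h1 := T.dep_iter k v
  have h2 := T.dep_par c (T.mem_kids.1 hc).1
  rw [(T.mem_kids.1 hc).2] at h2
  rw [hk] at h1
  omega

theorem desc_kid_disjoint {v c d : V} (hc : c ∈ T.kids v) (hd : d ∈ T.kids v) (hcd : c ≠ d) :
    Disjoint (T.desc c) (T.desc d) := by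
  have key : ∀ c d : V, c ∈ T.kids v → d ∈ T.kids v → c ≠ d → ∀ w k l, k ≤ l →
      T.par^[k] w = c → T.par^[l] w = d → False := by
    intro c d hc hd hcd w k l hkl h1 h2
    obtain ⟨j, rfl⟩ := Nat.exists_eq_add_of_le' hkl
    rw [Function.iterate_add_apply, h1] at h2
    cases j with
    | zero => exact hcd h2
    | succ j =>
      rw [Function.iterate_succ_apply, (T.mem_kids.1 hc).2] at h2
      exact T.not_mem_kid_desc hd (T.mem_desc.2 ⟨j, h2⟩)
  rw [Finset.disjoint_left]
  intro w h1 h2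
  obtain ⟨k, hk⟩ := T.mem_desc.1 h1
  obtain ⟨l, hl⟩ := T.mem_desc.1 h2
  rcases le_total k l with h | h
  · exact key c d hc hd hcd w k l h hk hl
  · exact key d c hd hc hcd.symm w l k h hl hk

theorem exists_kid {v w : V} (h : w ∈ T.desc v) (hne : w ≠ v) :
    ∃ c ∈ T.kids v, w ∈ T.desc c := by
  obtain ⟨k, hk⟩ := T.mem_desc.1 h
  induction k generalizing w with
  | zero => exact absurd hk hne
  | succ k ih =>
    rw [Function.iterate_succ_apply] at hk
    by_cases hp : T.par w = v
    · exact ⟨w, T.mem_kids.2 ⟨T.ne_root_of_mem h hne, hp⟩, T.self_mem w⟩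
    · obtain ⟨c, hc, hwc⟩ := ih (T.par_mem h hne) hp hk
      obtain ⟨j, hj⟩ := T.mem_desc.1 hwc
      exact ⟨c, hc, T.mem_desc.2 ⟨j + 1, by rwa [Function.iterate_succ_apply]⟩⟩

theorem desc_eq (v : V) : T.desc v = insert v ((T.kids v).biUnion T.desc) := by
  ext w
  rw [Finset.mem_insert, Finset.mem_biUnion]
  constructor
  · intro h
    by_cases hw : w = v
    · exact Or.inl hw
    · exact Or.inr (T.exists_kid h hw)
  · rintro (rfl | ⟨c, hc, hw⟩)
    · exact T.self_mem w
    · exact T.kid_desc_subset hc hw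

theorem sz_eq (v : V) : T.sz v = 1 + ∑ c ∈ T.kids v, T.sz c := by
  unfold sz
  rw [T.desc_eq v, Finset.card_insert_of_notMem, Finset.card_biUnion, add_comm]
  · intro c hc d hd hcd
    exact T.desc_kid_disjoint hc hd hcd
  · rw [Finset.mem_biUnion]
    rintro ⟨c, hc, hv⟩
    exact T.not_mem_kid_desc hc hv

theorem sz_pos (v : V) : 1 ≤ T.sz v := by rw [T.sz_eq]; omega

theorem sz_kid_lt {v c : V} (hc : c ∈ T.kids v) : T.sz c < T.sz v := by
  have := Finset.single_le_sum (f := T.sz) (fun _ _ => Nat.zero_le _) hc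
  rw [T.sz_eq v]; omega

end RTree

/-! ### Planarity through half-open edges -/

/-- The half-open segment `(a, b]`. -/
def piece (a b : ℝ × ℝ) : Set (ℝ × ℝ) := {z | ∃ t : ℝ, 0 < t ∧ t ≤ 1 ∧ z = a + t • (b - a)}

/-- Lattice points of the plane. -/
def IsInt (z : ℝ × ℝ) : Prop := ∃ i j : ℤ, z = ((i : ℝ), (j : ℝ))

theorem right_mem_piece (a b : ℝ × ℝ) : b ∈ piece a b := ⟨1, one_pos, le_rfl, by simp⟩

variable {V : Type} [Fintype V] [DecidableEq V] (T : RTree V)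

/-- The subtrees of the children `K` of `v`, together with the edges joining them to `v`, have a
planar lattice drawing with `v` at the origin and everything except the origin inside `Z`.
Planarity is encoded by assigning to each vertex `w` the half-open edge from its parent (excluded)
to `w` (included) and requiring these half-open edges to be pairwise disjoint. -/
def Placed (v : V) (K : Finset V) (Z : Set (ℝ × ℝ)) : Prop :=
  ∃ f : V → ℝ × ℝ, f v = 0 ∧
    (∀ w ∈ K.biUnion T.desc, IsInt (f w) ∧ piece (f (T.par w)) (f w) ⊆ Z) ∧
    ∀ w ∈ K.biUnion T.desc, ∀ w' ∈ K.biUnion T.desc, w ≠ w' →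
      Disjoint (piece (f (T.par w)) (f w)) (piece (f (T.par w')) (f w'))

/-- The subtree rooted at `v` has a planar lattice drawing inside `R` with `v` at the origin. -/
def Draw (v : V) (R : Set (ℝ × ℝ)) : Prop := Placed T v (T.kids v) (R \ {0})

variable {T}

theorem Placed.mono {v : V} {K : Finset V} {Z Z' : Set (ℝ × ℝ)} (h : Placed T v K Z)
    (hZ : Z ⊆ Z') : Placed T v K Z' := by
  obtain ⟨f, h0, h1, h2⟩ := h
  exact ⟨f, h0, fun w hw => ⟨(h1 w hw).1, (h1 w hw).2.trans hZ⟩, h2⟩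

theorem Draw.mono {v : V} {R R' : Set (ℝ × ℝ)} (h : Draw T v R) (hR : R ⊆ R') : Draw T v R' :=
  Placed.mono h (Set.sdiff_subset_sdiff_left hR)

theorem Placed.empty (v : V) (Z : Set (ℝ × ℝ)) : Placed T v ∅ Z :=
  ⟨fun _ => 0, rfl, by simp, by simp⟩

theorem Placed.draw {v : V} {Z R : Set (ℝ × ℝ)} (h : Placed T v (T.kids v) Z)
    (hZ : ∀ z ∈ Z, z ∈ R ∧ z ≠ 0) : Draw T v R :=
  h.mono fun z hz => ⟨(hZ z hz).1, (hZ z hz).2⟩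

/-- Drawings of disjoint families of children in disjoint zones can be superimposed. -/
theorem Placed.union {v : V} {K₁ K₂ : Finset V} {Z₁ Z₂ : Set (ℝ × ℝ)}
    (h1 : Placed T v K₁ Z₁) (h2 : Placed T v K₂ Z₂)
    (hK : K₁ ∪ K₂ ⊆ T.kids v) (hZ : ∀ z ∈ Z₁, z ∉ Z₂) :
    Placed T v (K₁ ∪ K₂) (Z₁ ∪ Z₂) := by
  obtain ⟨f, f0, fi, fd⟩ := h1
  obtain ⟨g, g0, gi, gd⟩ := h2
  -- the parent of a vertex below `K` is either below `K` or equal to `v`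
  have hpar : ∀ K : Finset V, K ⊆ T.kids v → ∀ w ∈ K.biUnion T.desc,
      T.par w ∈ K.biUnion T.desc ∨ T.par w = v := by
    intro K hK w hw
    obtain ⟨c, hc, hwc⟩ := Finset.mem_biUnion.1 hw
    by_cases h : w = c
    · exact Or.inr (by rw [h]; exact (T.mem_kids.1 (hK hc)).2)
    · exact Or.inl (Finset.mem_biUnion.2 ⟨c, hc, T.par_mem hwc h⟩)
  have hv : ∀ K : Finset V, K ⊆ T.kids v → v ∉ K.biUnion T.desc := by
    intro K hK hv
    obtain ⟨c, hc, hvc⟩ := Finset.mem_biUnion.1 hv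
    exact T.not_mem_kid_desc (hK hc) hvc
  have hK1 : K₁ ⊆ T.kids v := Finset.subset_union_left.trans hK
  have hK2 : K₂ ⊆ T.kids v := Finset.subset_union_right.trans hK
  have hmem : ∀ K : Finset V, ∀ w, T.par w ∈ K.biUnion T.desc → w ∈ K.biUnion T.desc := by
    intro K w hw
    obtain ⟨c, hc, hwc⟩ := Finset.mem_biUnion.1 hw
    obtain ⟨k, hk⟩ := T.mem_desc.1 hwc
    exact Finset.mem_biUnion.2 ⟨c, hc, T.mem_desc.2 ⟨k + 1, by rwa [Function.iterate_succ_apply]⟩⟩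
  set F : V → ℝ × ℝ := fun w => if w ∈ K₁.biUnion T.desc then f w else g w with hF
  have hFf : ∀ w ∈ K₁.biUnion T.desc, F w = f w := fun w hw => if_pos hw
  have hFg : ∀ w, w ∉ K₁.biUnion T.desc → F w = g w := fun w hw => if_neg hw
  have hFv : F v = 0 := by rw [hFg v (hv K₁ hK1), g0]
  have p1 : ∀ w ∈ K₁.biUnion T.desc, piece (F (T.par w)) (F w) = piece (f (T.par w)) (f w) := by
    intro w hw
    rw [hFf w hw]
    rcases hpar K₁ hK1 w hw with h | h
    · rw [hFf _ h]
    · rw [h, hFv, f0]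
  have p2 : ∀ w ∈ K₂.biUnion T.desc, w ∉ K₁.biUnion T.desc →
      piece (F (T.par w)) (F w) = piece (g (T.par w)) (g w) := by
    intro w hw hw'
    rw [hFg w hw', hFg _ fun h => hw' (hmem K₁ w h)]
  have hsplit : ∀ w ∈ (K₁ ∪ K₂).biUnion T.desc, w ∈ K₁.biUnion T.desc ∨
      (w ∈ K₂.biUnion T.desc ∧ w ∉ K₁.biUnion T.desc) := by
    intro w hw
    rw [Finset.union_biUnion, Finset.mem_union] at hw
    tauto
  have cross : ∀ w ∈ K₁.biUnion T.desc, ∀ w' ∈ K₂.biUnion T.desc, 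
      Disjoint (piece (f (T.par w)) (f w)) (piece (g (T.par w')) (g w')) := by
    intro w hw w' hw'
    rw [Set.disjoint_left]
    exact fun z hz hz' => hZ z ((fi w hw).2 hz) ((gi w' hw').2 hz')
  refine ⟨F, hFv, ?_, ?_⟩
  · intro w hw
    rcases hsplit w hw with h | ⟨h, h'⟩
    · rw [p1 w h, hFf w h]
      exact ⟨(fi w h).1, (fi w h).2.trans Set.subset_union_left⟩
    · rw [p2 w h h', hFg w h']
      exact ⟨(gi w h).1, (gi w h).2.trans Set.subset_union_right⟩
  · intro w hw w' hw' hne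
    rcases hsplit w hw with h | ⟨h, h'⟩ <;> rcases hsplit w' hw' with k | ⟨k, k'⟩
    · rw [p1 w h, p1 w' k]
      exact fd w h w' k hne
    · rw [p1 w h, p2 w' k k']
      exact cross w h w' k
    · rw [p1 w' k, p2 w h h']
      exact (cross w' k w h).symm
    · rw [p2 w h h', p2 w' k k']
      exact gd w h w' k hne

/-- Pairwise disjoint zones for single children give a zone for the whole family. -/
theorem Placed.iUnion {v : V} {K : Finset V} (hK : K ⊆ T.kids v) (E : V → Set (ℝ × ℝ))
    (h : ∀ c ∈ K, Placed T v {c} (E c))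
    (hE : ∀ c ∈ K, ∀ d ∈ K, c ≠ d → ∀ z ∈ E c, z ∉ E d) :
    Placed T v K {z | ∃ c ∈ K, z ∈ E c} := by
  induction K using Finset.induction_on with
  | empty => exact Placed.empty _ _
  | insert c K hc ih =>
    have h1 := ih ((Finset.subset_insert _ _).trans hK)
      (fun d hd => h d (Finset.mem_insert_of_mem hd))
      (fun d hd e he => hE d (Finset.mem_insert_of_mem hd) e (Finset.mem_insert_of_mem he))
    have h2 := h c (Finset.mem_insert_self _ _)
    have := Placed.union h2 h1 (by rwa [← Finset.insert_eq]) (by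
      rintro z hz ⟨d, hd, hzd⟩
      exact hE c (Finset.mem_insert_self _ _) d (Finset.mem_insert_of_mem hd)
        (by rintro rfl; exact hc hd) z hz hzd)
    rw [← Finset.insert_eq] at this
    refine this.mono ?_
    rintro z (hz | ⟨d, hd, hz⟩)
    · exact ⟨c, Finset.mem_insert_self _ _, hz⟩
    · exact ⟨d, Finset.mem_insert_of_mem hd, hz⟩

/-- The lattice-preserving affine map `(x, y) ↦ x • (a, b) + y • (a', b') + (e, e')`. -/
def aff (a b a' b' e e' : ℤ) (z : ℝ × ℝ) : ℝ × ℝ :=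
  (z.1 * a + z.2 * a' + e, z.1 * b + z.2 * b' + e')

theorem aff_piece (a b a' b' e e' : ℤ) (x y : ℝ × ℝ) :
    piece (aff a b a' b' e e' x) (aff a b a' b' e e' y) = Set.image (aff a b a' b' e e') (piece x y) := by
  ext z
  simp only [piece, aff, Set.mem_ofPred_eq, Set.mem_image]
  constructor
  · rintro ⟨t, h0, h1, rfl⟩
    refine ⟨_, ⟨t, h0, h1, rfl⟩, ?_⟩
    ext <;> simp <;> ring
  · rintro ⟨_, ⟨t, h0, h1, rfl⟩, rfl⟩
    refine ⟨t, h0, h1, ?_⟩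
    ext <;> simp <;> ring

theorem aff_inj {a b a' b' : ℤ} (e e' : ℤ) (hdet : a * b' - a' * b ≠ 0) :
    Function.Injective (aff a b a' b' e e') := by
  rintro ⟨x, y⟩ ⟨u, w⟩ h
  simp only [aff, Prod.mk.injEq] at h
  obtain ⟨h1, h2⟩ := h
  have hd : ((a : ℝ) * b' - a' * b) ≠ 0 := by exact_mod_cast hdet
  have hx : ((a : ℝ) * b' - a' * b) * (x - u) = 0 := by linear_combination b' * h1 - a' * h2
  have hy : ((a : ℝ) * b' - a' * b) * (y - w) = 0 := by linear_combination a * h2 - b * h1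
  rw [mul_eq_zero, or_iff_right hd, sub_eq_zero] at hx hy
  rw [hx, hy]

/-- A drawing of the subtree at a child `c` of `v` may be transported by an affine lattice map
into a zone `E` that also contains the edge from `v` (at the origin) to `c`. -/
theorem Draw.place {v c : V} (hc : c ∈ T.kids v) {R E : Set (ℝ × ℝ)} (h : Draw T c R)
    (a b a' b' e e' : ℤ) (hdet : a * b' - a' * b ≠ 0)
    (hR : ∀ z ∈ R, z ≠ 0 → aff a b a' b' e e' z ∈ E)
    (hs : ∀ t : ℝ, 0 < t → t ≤ 1 → (t * e, t * e') ∈ E)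
    (hd : ∀ z ∈ R, z ≠ 0 → ∀ t : ℝ, 0 < t → t ≤ 1 → aff a b a' b' e e' z ≠ (t * e, t * e')) :
    Placed T v {c} E := by
  obtain ⟨f, f0, fi, fd⟩ := h
  set φ := aff a b a' b' e e' with hφ
  have φ0 : φ 0 = ((e : ℝ), (e' : ℝ)) := by simp [hφ, aff]
  have hinj : Function.Injective φ := aff_inj e e' hdet
  have hvc := T.not_mem_kid_desc hc
  set F : V → ℝ × ℝ := fun w => if w = v then 0 else φ (f w) with hF
  have hFv : F v = 0 := if_pos rfl
  have hFw : ∀ w ∈ T.desc c, F w = φ (f w) := fun w hw => if_neg (by rintro rfl; exact hvc hw)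
  have hFc : F c = ((e : ℝ), (e' : ℝ)) := by rw [hFw c (T.self_mem c), f0, φ0]
  have pc : piece (F (T.par c)) (F c) = {z | ∃ t : ℝ, 0 < t ∧ t ≤ 1 ∧ z = (t * e, t * e')} := by
    rw [(T.mem_kids.1 hc).2, hFv, hFc]
    simp [piece]
  have pw : ∀ w ∈ T.desc c, w ≠ c → piece (F (T.par w)) (F w) =
      φ '' piece (f (T.par w)) (f w) := by
    intro w hw hwc
    rw [hFw w hw, hFw _ (T.par_mem hw hwc), aff_piece]
  have hbi : ∀ w ∈ T.desc c, w ≠ c → w ∈ (T.kids c).biUnion T.desc := by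
    intro w hw hwc
    exact Finset.mem_biUnion.2 (T.exists_kid hw hwc)
  refine ⟨F, hFv, ?_, ?_⟩
  · intro w hw
    rw [Finset.singleton_biUnion] at hw
    by_cases hwc : w = c
    · subst hwc
      refine ⟨⟨e, e', hFc⟩, ?_⟩
      rw [pc]
      rintro z ⟨t, h0, h1, rfl⟩
      exact hs t h0 h1
    · obtain ⟨⟨i, j, hij⟩, hsub⟩ := fi w (hbi w hw hwc)
      constructor
      · rw [hFw w hw, hij]
        exact ⟨i * a + j * a' + e, i * b + j * b' + e', by simp [hφ, aff]⟩
      · rw [pw w hw hwc]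
        rintro _ ⟨z, hz, rfl⟩
        exact hR z (hsub hz).1 (hsub hz).2
  · have hcw : ∀ w ∈ T.desc c, w ≠ c →
        Disjoint (piece (F (T.par c)) (F c)) (piece (F (T.par w)) (F w)) := by
      intro w hw hwc
      rw [pc, pw w hw hwc, Set.disjoint_left]
      rintro _ ⟨t, h0, h1, rfl⟩ ⟨z, hz, hzt⟩
      have := (fi w (hbi w hw hwc)).2 hz
      exact hd z this.1 this.2 t h0 h1 hzt
    intro w hw w' hw' hne
    rw [Finset.singleton_biUnion] at hw hw'
    by_cases hwc : w = c
    · subst hwc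
      exact hcw w' hw' hne.symm
    · by_cases hwc' : w' = c
      · subst hwc'
        exact (hcw w hw hwc).symm
      · rw [pw w hw hwc, pw w' hw' hwc', Set.disjoint_image_iff hinj]
        exact fd w (hbi w hw hwc) w' (hbi w' hw' hwc') hne

/-- Reflection in the diagonal. -/
theorem Placed.swap {v : V} {K : Finset V} {Z : Set (ℝ × ℝ)} (h : Placed T v K Z) :
    Placed T v K {z | (z.2, z.1) ∈ Z} := by
  obtain ⟨f, f0, fi, fd⟩ := h
  have hp : ∀ x y : ℝ × ℝ, piece (x.2, x.1) (y.2, y.1) = {z | (z.2, z.1) ∈ piece x y} := by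
    intro x y
    ext z
    simp only [piece, Set.mem_ofPred_eq, Prod.ext_iff]
    simp [and_comm]
  refine ⟨fun w => ((f w).2, (f w).1), by simp [f0], ?_, ?_⟩
  · intro w hw
    obtain ⟨⟨i, j, hij⟩, hs⟩ := fi w hw
    refine ⟨⟨j, i, by simp [hij]⟩, ?_⟩
    rw [hp]
    exact fun z hz => hs hz
  · intro w hw w' hw' hne
    rw [hp, hp, Set.disjoint_left]
    exact fun z hz hz' => Set.disjoint_left.1 (fd w hw w' hw' hne) hz hz'

theorem Draw.swap {v : V} {R : Set (ℝ × ℝ)} (h : Draw T v R) :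
    Draw T v {z | (z.2, z.1) ∈ R} := by
  refine (Placed.swap h).mono ?_
  rintro z ⟨h1, h2⟩
  refine ⟨h1, fun h => h2 ?_⟩
  rw [Set.mem_singleton_iff] at h ⊢
  rw [h]; rfl

end TreeDraw

namespace TreeDraw

variable {V : Type} [Fintype V] [DecidableEq V] {T : RTree V}

/-! ### Rows, columns and small trees -/

/-- The rectangle `[0, W] × [0, H]`. -/
def box (W H : ℕ) : Set (ℝ × ℝ) := {z | 0 ≤ z.1 ∧ z.1 ≤ W ∧ 0 ≤ z.2 ∧ z.2 ≤ H}

theorem box_mono {W W' H H' : ℕ} (hW : W ≤ W') (hH : H ≤ H') : box W H ⊆ box W' H' := by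
  rintro z ⟨h1, h2, h3, h4⟩
  have hW' : (W : ℝ) ≤ W' := by exact_mod_cast hW
  have hH' : (H : ℝ) ≤ H' := by exact_mod_cast hH
  exact ⟨h1, h2.trans hW', h3, h4.trans hH'⟩

theorem Draw.translate {v c : V} (hc : c ∈ T.kids v) {R E : Set (ℝ × ℝ)} (h : Draw T c R)
    (e e' : ℤ)
    (hR : ∀ z ∈ R, z ≠ 0 → (z.1 + e, z.2 + e') ∈ E)
    (hs : ∀ t : ℝ, 0 < t → t ≤ 1 → (t * e, t * e') ∈ E)
    (hd : ∀ z ∈ R, z ≠ 0 → ∀ t : ℝ, 0 < t → t ≤ 1 → z.1 + e = t * e → z.2 + e' ≠ t * e') :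
    Placed T v {c} E := by
  refine h.place hc 1 0 0 1 e e' (by norm_num) ?_ hs ?_
  · intro z hz hz0
    simpa [aff] using hR z hz hz0
  · intro z hz hz0 t h0 h1 heq
    simp only [aff, Prod.mk.injEq] at heq
    push_cast at heq
    refine hd z hz hz0 t h0 h1 ?_ ?_ <;> linarith [heq.1, heq.2]

/-- When the child lies strictly below its parent and its drawing extends downwards, the edge to
it avoids the drawing automatically. -/
theorem Draw.translate_down {v c : V} (hc : c ∈ T.kids v) {R E : Set (ℝ × ℝ)} (h : Draw T c R)
    (e e' : ℕ) (he' : 1 ≤ e') (hRpos : ∀ z ∈ R, 0 ≤ z.2)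
    (hR : ∀ z ∈ R, z ≠ 0 → (z.1 + e, z.2 + e') ∈ E)
    (hs : ∀ t : ℝ, 0 < t → t ≤ 1 → (t * e, t * e') ∈ E) :
    Placed T v {c} E := by
  refine h.translate hc e e' (by simpa using hR) (by simpa using hs) ?_
  intro z hz hz0 t h0 h1 hx hy
  push_cast at hx hy
  have h2 := hRpos z hz
  have h3 : (1 : ℝ) ≤ e' := by exact_mod_cast he'
  have h4 : t = 1 := by
    by_contra hne
    have : t < 1 := lt_of_le_of_ne h1 hne
    nlinarith
  subst h4
  exact hz0 (Prod.ext (by simpa using hx) (by simpa using hy))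

/-- The part of the plane used by boxes hanging from row `Y` between the columns `a` and `b - 1`,
together with the segments joining the origin to their top sides. -/
def rowZone (a b Y h : ℕ) : Set (ℝ × ℝ) :=
  {z | 0 < z.2 ∧ z.2 ≤ Y + h ∧ a * min z.2 Y ≤ z.1 * Y ∧ z.1 * Y ≤ (b - 1) * min z.2 Y}

/-- Boxes side by side with their upper left corners on row `Y`. -/
theorem row {v : V} {K : Finset V} (hK : K ⊆ T.kids v) (w : V → ℕ) (h Y a : ℕ) (hY : 1 ≤ Y)
    (hd : ∀ c ∈ K, Draw T c (box (w c) h)) :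
    Placed T v K (rowZone a (a + ∑ c ∈ K, (w c + 1)) Y h) := by
  induction K using Finset.induction_on with
  | empty => exact Placed.empty _ _
  | insert c K hc ih =>
    have h1 := ih ((Finset.subset_insert _ _).trans hK)
      (fun d hd' => hd d (Finset.mem_insert_of_mem hd'))
    set X := a + ∑ c ∈ K, (w c + 1) with hX
    have hYr : (1 : ℝ) ≤ Y := by exact_mod_cast hY
    have h2 : Placed T v {c} (rowZone X (X + (w c + 1)) Y h) := by
      refine (hd c (Finset.mem_insert_self _ _)).translate_down
        (hK (Finset.mem_insert_self _ _)) X Y hY (fun z hz => hz.2.2.1) ?_ ?_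
      · rintro ⟨x, y⟩ ⟨h1, h2, h3, h4⟩ _
        simp only at h1 h2 h3 h4
        simp only [rowZone, Set.mem_ofPred_eq]
        rw [min_eq_right (by linarith)]
        push_cast
        refine ⟨by linarith, by linarith, ?_, ?_⟩ <;> nlinarith
      · intro t h0 h1
        simp only [rowZone, Set.mem_ofPred_eq]
        rw [min_eq_left (by nlinarith)]
        push_cast
        have h5 : (0 : ℝ) ≤ w c * (t * Y) := by positivity
        have h6 : (0 : ℝ) ≤ h := by positivity
        refine ⟨by positivity, by nlinarith, by linarith, by linarith⟩
    have h3 := Placed.union h2 h1 (by rwa [← Finset.insert_eq]) (by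
      rintro z ⟨p1, _, p3, _⟩ ⟨_, _, _, p4⟩
      have : 0 < min z.2 Y := lt_min p1 (by linarith)
      linarith)
    rw [← Finset.insert_eq] at h3
    refine h3.mono ?_
    rw [Finset.sum_insert hc]
    have hwc : (0 : ℝ) ≤ w c := by positivity
    have haX : (a : ℝ) ≤ X := by exact_mod_cast (by omega : a ≤ X)
    have hb : ((a + (w c + 1 + ∑ c ∈ K, (w c + 1)) : ℕ) : ℝ) = X + (w c + 1) := by
      rw [hX]; push_cast; ring
    rintro z (⟨p1, p2, p3, p4⟩ | ⟨p1, p2, p3, p4⟩)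
    · have : 0 < min z.2 Y := lt_min p1 (by linarith)
      refine ⟨p1, p2, by nlinarith, ?_⟩
      rw [hb]; push_cast at p4; exact p4
    · have : 0 < min z.2 Y := lt_min p1 (by linarith)
      refine ⟨p1, p2, p3, ?_⟩
      rw [hb]; nlinarith

/-- The part of the plane used by boxes stacked in the columns from `1` to `1 + W` between the
rows `a` and `b - 1`, together with the segments joining the origin to their left sides. -/
def colZone (a b W : ℕ) : Set (ℝ × ℝ) :=
  {z | 0 < z.1 ∧ z.1 ≤ 1 + W ∧ a * min z.1 1 ≤ z.2 ∧ z.2 ≤ (b - 1) * min z.1 1}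

/-- Boxes on top of each other with their upper left corners on column `1`. -/
theorem column {v : V} {K : Finset V} (hK : K ⊆ T.kids v) (h : V → ℕ) (W a : ℕ)
    (hd : ∀ c ∈ K, Draw T c (box W (h c))) :
    Placed T v K (colZone a (a + ∑ c ∈ K, (h c + 1)) W) := by
  have h1 := row hK h W 1 a le_rfl (fun c hc => (hd c hc).swap.mono (by
    rintro z ⟨h1, h2, h3, h4⟩
    exact ⟨h3, h4, h1, h2⟩))
  refine h1.swap.mono ?_
  rintro z ⟨h1, h2, h3, h4⟩
  simp only [Nat.cast_one, mul_one] at h1 h2 h3 h4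
  exact ⟨h1, h2, h3, h4⟩

/-- A tree with fewer than `2 ^ (ℓ + 1)` vertices has a drawing in `ℓ + 1` rows: the largest
subtree continues on the row of the root, all the others hang from the next row. -/
theorem small (v : V) (ℓ : ℕ) (hv : T.sz v < 2 ^ (ℓ + 1)) : Draw T v (box (T.sz v - 1) ℓ) := by
  induction hn : T.sz v using Nat.strong_induction_on generalizing v ℓ with
  | _ n ih =>
  rcases (T.kids v).eq_empty_or_nonempty with hk | hk
  · unfold Draw
    rw [hk]
    exact Placed.empty _ _
  obtain ⟨g, hg, hmax⟩ := Finset.exists_max_image (T.kids v) T.sz hk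
  set K := (T.kids v).erase g with hKdef
  have hK : K ⊆ T.kids v := Finset.erase_subset _ _
  have hsum : ∑ c ∈ K, T.sz c + T.sz g = ∑ c ∈ T.kids v, T.sz c := Finset.sum_erase_add _ _ hg
  have hsz := T.sz_eq v
  have hg1 := T.sz_pos g
  obtain ⟨ℓ, rfl⟩ : ∃ m, ℓ = m + 1 := by
    refine Nat.exists_eq_succ_of_ne_zero ?_
    rintro rfl
    norm_num at hv
    omega
  have hlight : ∀ c ∈ K, Draw T c (box (T.sz c - 1) ℓ) := by
    intro c hc
    refine ih _ (hn ▸ T.sz_kid_lt (hK hc)) c ℓ ?_ rfl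
    have h1 := Finset.single_le_sum (f := T.sz) (fun _ _ => Nat.zero_le _) hc
    have h2 := hmax c (hK hc)
    rw [pow_succ] at hv
    omega
  have hheavy : Draw T g (box (T.sz g - 1) (ℓ + 1)) :=
    ih _ (hn ▸ T.sz_kid_lt hg) g _ ((T.sz_kid_lt hg).trans hv) rfl
  have hrow := row hK (fun c => T.sz c - 1) ℓ 1 1 le_rfl hlight
  have hs : ∑ c ∈ K, (T.sz c - 1 + 1) = ∑ c ∈ K, T.sz c :=
    Finset.sum_congr rfl fun c _ => Nat.sub_add_cancel (T.sz_pos c)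
  rw [hs] at hrow
  set s := ∑ c ∈ K, T.sz c with hsdef
  have hnr : ((n - 1 : ℕ) : ℝ) = s + T.sz g := by
    rw [← Nat.cast_add]; congr 1; omega
  have hgr : ((T.sz g - 1 : ℕ) : ℝ) = T.sz g - 1 := by push_cast [hg1]; ring
  have hs0 : (0 : ℝ) ≤ s := by positivity
  have hg1r : (1 : ℝ) ≤ T.sz g := by exact_mod_cast hg1
  have hℓ : (0 : ℝ) ≤ ℓ := by positivity
  have hgp : Placed T v {g} {z | z ∈ box (n - 1) (ℓ + 1) ∧ 0 < z.1 ∧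
      (z.2 = 0 ∨ (s : ℝ) + 1 ≤ z.1)} := by
    refine hheavy.translate hg (s + 1) 0 ?_ ?_ ?_
    · rintro ⟨x, y⟩ ⟨h1, h2, h3, h4⟩ _
      simp only at h1 h2 h3 h4
      rw [hgr] at h2
      simp only [box, Set.mem_ofPred_eq, hnr]
      push_cast at h4 ⊢
      exact ⟨⟨by linarith, by linarith, by linarith, by linarith⟩, by linarith,
        Or.inr (by linarith)⟩
    · intro t h0 h1
      simp only [box, Set.mem_ofPred_eq, hnr]
      push_cast
      have h2 : t * (s + 1) ≤ s + 1 := by nlinarith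
      exact ⟨⟨by positivity, by linarith, by simp, by simp; positivity⟩, by positivity,
        Or.inl (by simp)⟩
    · rintro ⟨x, y⟩ ⟨h1, h2, h3, h4⟩ hz t h0 ht hx hy
      simp only at h1 h2 h3 h4 hx hy
      push_cast at hx hy
      have h5 : t * (s + 1) ≤ s + 1 := by nlinarith
      exact hz (Prod.ext (by simp only [Prod.fst_zero]; linarith)
        (by simp only [Prod.snd_zero]; linarith))
  have hdis : ∀ z ∈ rowZone 1 (1 + s) 1 ℓ, z ∉ {z : ℝ × ℝ | z ∈ box (n - 1) (ℓ + 1) ∧ 0 < z.1 ∧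
      (z.2 = 0 ∨ (s : ℝ) + 1 ≤ z.1)} := by
    rintro z ⟨p1, p2, p3, p4⟩ ⟨_, _, h | h⟩
    · linarith
    · push_cast at p4
      have := min_le_right z.2 1
      nlinarith
  have hall := Placed.union hrow hgp (by
    rw [hKdef, Finset.union_comm, ← Finset.insert_eq, Finset.insert_erase hg]) hdis
  rw [hKdef, Finset.union_comm, ← Finset.insert_eq, Finset.insert_erase hg] at hall
  refine hall.draw ?_
  rintro z (⟨p1, p2, p3, p4⟩ | ⟨h1, h2, h3⟩)
  · push_cast at p2 p3 p4
    have h5 : 0 < min z.2 1 := lt_min p1 one_pos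
    have h6 := min_le_right z.2 (1 : ℝ)
    refine ⟨⟨by linarith, ?_, p1.le, ?_⟩, ?_⟩
    · rw [hnr]; nlinarith
    · push_cast; linarith
    · rintro rfl; simp at p1
  · exact ⟨h1, by rintro rfl; simp at h2⟩

/-! ### Many small subtrees in lattice cones -/

/-- The totients up to `M` sum to at least `M² / 16`: in
`∑_{d ≤ M} φ(d) ⌊M / d⌋ = ∑_{k ≤ M} ∑_{d ∣ k} φ(d) = M (M + 1) / 2` the terms with `d ≤ M / 4`
contribute at most `M² / 4`, and the others have `⌊M / d⌋ < 4`. -/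
theorem sum_totient_ge (M : ℕ) :
    M ^ 2 ≤ 16 * ∑ d ∈ Finset.Ioc 0 M, Nat.totient d := by
  have h1 : ∑ d ∈ Finset.Ioc 0 M, Nat.totient d * (M / d) = ∑ k ∈ Finset.Ioc 0 M, k := by
    have : ∀ k ∈ Finset.Ioc 0 M, k = ∑ d ∈ Finset.Ioc 0 M, if d ∣ k then Nat.totient d else 0 := by
      intro k hk
      rw [Finset.mem_Ioc] at hk
      conv_lhs => rw [← Nat.sum_totient k]
      rw [← Finset.sum_filter]
      refine Finset.sum_congr ?_ fun _ _ => rfl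
      ext d
      simp only [Nat.mem_divisors, Finset.mem_filter, Finset.mem_Ioc]
      constructor
      · rintro ⟨h, _⟩
        exact ⟨⟨Nat.pos_of_dvd_of_pos h hk.1, (Nat.le_of_dvd hk.1 h).trans hk.2⟩, h⟩
      · rintro ⟨_, h⟩
        exact ⟨h, by omega⟩
    rw [Finset.sum_congr rfl this, Finset.sum_comm]
    refine Finset.sum_congr rfl fun d _ => ?_
    rw [← Finset.sum_filter, Finset.sum_const, smul_eq_mul, mul_comm, Nat.Ioc_filter_dvd_card_eq_div]
  have h2 : M ^ 2 ≤ 2 * ∑ k ∈ Finset.Ioc 0 M, k := by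
    clear h1
    induction M with
    | zero => simp
    | succ n ih =>
      rw [← Finset.insert_Ioc_right_eq_Ioc_add_one (Nat.zero_le n), Finset.sum_insert (by simp)]
      nlinarith
  have h3 : ∀ d ∈ Finset.Ioc 0 M, Nat.totient d * (M / d) * 4 ≤
      (if d ∈ Finset.Ioc 0 (M / 4) then 4 * M else 0) + 12 * Nat.totient d := by
    intro d hd
    rw [Finset.mem_Ioc] at hd
    split_ifs with h
    · have : Nat.totient d * (M / d) ≤ M :=
        (Nat.mul_le_mul_right _ (Nat.totient_le d)).trans (Nat.mul_div_le M d)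
      omega
    · rw [Finset.mem_Ioc] at h
      have : M / d < 4 := by
        rw [Nat.div_lt_iff_lt_mul hd.1]
        omega
      have : M / d ≤ 3 := by omega
      nlinarith [Nat.mul_le_mul_left (Nat.totient d) this]
  have h4 := Finset.sum_le_sum h3
  rw [← Finset.sum_mul, h1, Finset.sum_add_distrib, ← Finset.mul_sum, ← Finset.sum_filter,
    Finset.sum_const, smul_eq_mul] at h4
  have h5 : (Finset.filter (fun d => d ∈ Finset.Ioc 0 (M / 4)) (Finset.Ioc 0 M)).card ≤ M / 4 := by
    refine (Finset.card_le_card (t := Finset.Ioc 0 (M / 4)) ?_).trans (by simp)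
    intro d hd
    exact (Finset.mem_filter.1 hd).2
  have h6 : (Finset.filter (fun d => d ∈ Finset.Ioc 0 (M / 4)) (Finset.Ioc 0 M)).card * (4 * M) ≤
      M ^ 2 := by
    have := Nat.div_mul_le_self M 4
    calc _ ≤ (M / 4) * (4 * M) := Nat.mul_le_mul_right _ h5
      _ = (M / 4 * 4) * M := by ring
      _ ≤ M * M := Nat.mul_le_mul_right _ this
      _ = M ^ 2 := by ring
  omega
end TreeDraw

namespace TreeDraw

variable {V : Type} [Fintype V] [DecidableEq V] {T : RTree V}

/-- The part below row `N` of the cone of directions strictly between `(x, y)` and `(x', y')`. -/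
def cone (x y x' y' : ℤ) (N : ℕ) : Set (ℝ × ℝ) :=
  {z | 0 < z.2 ∧ z.2 ≤ N ∧ x * z.2 < z.1 * y ∧ z.1 * y' < x' * z.2}

/-- The part below row `N` of the cone of directions strictly between `(a, 1)` and `(b, 1)`. -/
def wedge (a b N : ℕ) : Set (ℝ × ℝ) := {z | 0 < z.2 ∧ z.2 ≤ N ∧ a * z.2 < z.1 ∧ z.1 < b * z.2}

/-- The successor `x' / y'` of the fraction `x / y` in the Farey sequence of order `M`. -/
theorem farey_succ {x y : ℕ} (M : ℕ) (h : y.Coprime x) (hy : 0 < y) :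
    ∃ x' y' : ℤ, x' * y - x * y' = 1 ∧ (M : ℤ) - y < y' ∧ y' ≤ M := by
  have hb := Nat.gcd_eq_gcd_ab x y
  rw [Nat.coprime_comm.1 h] at hb
  set u := Nat.gcdA x y
  set w := Nat.gcdB x y
  have hy' : (0 : ℤ) < y := by exact_mod_cast hy
  have h1 := Int.emod_nonneg (M + u) hy'.ne'
  have h2 := Int.emod_lt_of_pos (M + u) hy'
  have h3 := Int.emod_add_mul_ediv (M + u) y
  set k := ((M : ℤ) + u) / y
  refine ⟨w + x * k, M - (M + u) % y, ?_, by linarith, by linarith⟩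
  have h4 : (M : ℤ) - (M + u) % y = - u + y * k := by linarith
  rw [h4]
  push_cast at hb
  linear_combination -hb

/-- If `(x₂, y₂)` with `y₂ ≤ M` has larger slope than `(x₁, y₁)`, it is not interior to the cone
between `(x₁, y₁)` and its Farey successor, since otherwise `y₂ ≥ y₁ + y₁' > M`. -/
theorem farey_gap {x₁ y₁ x₁' y₁' x₂ y₂ M : ℤ} (h : x₁' * y₁ - x₁ * y₁' = 1) (hy₁ : 0 < y₁)
    (hgap : M - y₁ < y₁') (hM : y₁ ≤ M) (hy₂ : y₂ ≤ M) (hlt : x₁ * y₂ < x₂ * y₁) :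
    x₁' * y₂ ≤ x₂ * y₁' := by
  by_contra! hcon
  have e : y₂ = (x₁' * y₂ - x₂ * y₁') * y₁ + (x₂ * y₁ - x₁ * y₂) * y₁' := by
    linear_combination (-y₂) * h
  have h1 : 1 ≤ x₁' * y₂ - x₂ * y₁' := by linarith
  have h2 : 1 ≤ x₂ * y₁ - x₁ * y₂ := by linarith
  nlinarith [mul_le_mul_of_nonneg_right h1 hy₁.le,
    mul_le_mul_of_nonneg_right h2 (by linarith : 0 ≤ y₁')]

/-- A drawing in a square fits, via the unimodular basis `(x, y), (x', y')`, into their cone. -/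
theorem place_cone {v c : V} (hc : c ∈ T.kids v) {t M N : ℕ} (ht : 1 ≤ t) (hN : 2 * t * M ≤ N)
    (hd : Draw T c (box (t - 1) (t - 1))) {x y x' y' : ℤ} (h : x' * y - x * y' = 1)
    (hy : 0 < y) (hyM : y ≤ M) (hy' : 0 < y') (hyM' : y' ≤ M) :
    Placed T v {c} (cone x y x' y' N) := by
  have hr : (x' : ℝ) * y - x * y' = 1 := by exact_mod_cast h
  have hyr : (0 : ℝ) < y := by exact_mod_cast hy
  have hyr' : (0 : ℝ) < y' := by exact_mod_cast hy'
  have hMr : (y : ℝ) ≤ M := by exact_mod_cast hyM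
  have hMr' : (y' : ℝ) ≤ M := by exact_mod_cast hyM'
  have hNr : 2 * (t : ℝ) * M ≤ N := by exact_mod_cast hN
  have htr : (1 : ℝ) ≤ t := by exact_mod_cast ht
  have htc : ((t - 1 : ℕ) : ℝ) = t - 1 := by push_cast [ht]; ring
  -- points with coordinates `l, m ∈ (0, t]` in the basis lie in the cone
  have key : ∀ l m : ℝ, 0 < l → l ≤ t → 0 < m → m ≤ t →
      (l * x + m * x', l * y + m * y') ∈ cone x y x' y' N := by
    intro l m hl hlt hm hmt
    have e1 : l * y ≤ t * M := mul_le_mul hlt hMr hyr.le (by linarith)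
    have e2 : m * y' ≤ t * M := mul_le_mul hmt hMr' hyr'.le (by linarith)
    refine ⟨by positivity, by simp only; linarith, ?_, ?_⟩
    · simp only
      have : (l * x + m * x') * y - x * (l * y + m * y') = m := by linear_combination m * hr
      linarith
    · simp only
      have : x' * (l * y + m * y') - (l * x + m * x') * y' = l := by linear_combination l * hr
      linarith
  refine hd.place hc x y x' y' (x + x') (y + y') (by rw [mul_comm x y']; linarith [mul_comm x y', h] ) ?_ ?_ ?_
  · rintro ⟨l, m⟩ ⟨h1, h2, h3, h4⟩ _
    rw [htc] at h2 h4
    simp only at h1 h2 h3 h4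
    convert key (l + 1) (m + 1) (by linarith) (by linarith) (by linarith) (by linarith) using 1
    simp only [aff]
    push_cast
    ext <;> simp <;> ring
  · intro s h0 h1
    convert key s s h0 (by linarith) h0 (by linarith) using 1
    push_cast
    ext <;> simp <;> ring
  · rintro ⟨l, m⟩ ⟨h1, h2, h3, h4⟩ hz s h0 hs heq
    simp only [aff, Prod.mk.injEq] at heq
    push_cast at heq
    simp only at h1 h3
    obtain ⟨q1, q2⟩ := heq
    -- comparing coordinates in the basis gives `l + 1 = s = m + 1`
    have hm : m + 1 = s := by linear_combination y * q1 - x * q2 + (s - m - 1) * hr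
    have hl : l + 1 = s := by linear_combination x' * q2 - y' * q1 + (s - l - 1) * hr
    exact hz (Prod.ext (by simp only [Prod.fst_zero]; linarith)
      (by simp only [Prod.snd_zero]; linarith))

theorem card_coprime_Ico (y a τ : ℕ) :
    ((Finset.Ico (a * y) ((a + τ) * y)).filter y.Coprime).card = τ * Nat.totient y := by
  induction τ with
  | zero => simp
  | succ τ ih =>
    have h1 : a * y ≤ (a + τ) * y := Nat.mul_le_mul_right _ (by omega)
    have h2 : (a + (τ + 1)) * y = (a + τ) * y + y := by ring
    rw [h2, ← Finset.Ico_union_Ico_eq_Ico h1 (Nat.le_add_right _ y), Finset.filter_union,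
      Finset.card_union_of_disjoint, ih, Nat.filter_coprime_Ico_eq_totient]
    · ring
    · refine Finset.disjoint_filter_filter ?_
      exact Finset.Ico_disjoint_Ico_consecutive _ _ _

/-- Subtrees drawn in `t × t` squares fit into the cones between consecutive Farey fractions of
order `M` with values in `[a, a + τ)`; there are `τ ∑_{y ≤ M} φ(y)` of these cones. -/
theorem farey {v : V} {K : Finset V} (hK : K ⊆ T.kids v) {t M N τ : ℕ} (a : ℕ) (ht : 1 ≤ t)
    (hN : 2 * t * M ≤ N) (hcard : 16 * K.card ≤ τ * M ^ 2)
    (hd : ∀ c ∈ K, Draw T c (box (t - 1) (t - 1))) :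
    Placed T v K (wedge a (a + τ) N) := by
  set P : Finset (Σ _ : ℕ, ℕ) := (Finset.Ioc 0 M).sigma fun y =>
    (Finset.Ico (a * y) ((a + τ) * y)).filter y.Coprime with hP
  have hPc : K.card ≤ P.card := by
    rw [hP, Finset.card_sigma, Finset.sum_congr rfl fun y _ => card_coprime_Ico y a τ,
      ← Finset.mul_sum]
    have := Nat.mul_le_mul_left τ (sum_totient_ge M)
    have e : τ * (16 * ∑ d ∈ Finset.Ioc 0 M, Nat.totient d) =
      16 * (τ * ∑ d ∈ Finset.Ioc 0 M, Nat.totient d) := by ring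
    omega
  obtain ⟨g⟩ : Nonempty (K ↪ P) := Function.Embedding.nonempty_of_card_le (by simpa using hPc)
  classical
  set p : V → Σ _ : ℕ, ℕ := fun c => if h : c ∈ K then (g ⟨c, h⟩).1 else ⟨0, 0⟩ with hp
  have hpP : ∀ c ∈ K, p c ∈ P := by
    intro c hc
    simp only [hp, dif_pos hc]
    exact (g ⟨c, hc⟩).2
  have hinj : ∀ c ∈ K, ∀ d ∈ K, c ≠ d → p c ≠ p d := by
    intro c hc d hd' hcd heq
    simp only [hp, dif_pos hc, dif_pos hd'] at heq
    have := g.injective (Subtype.ext heq)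
    exact hcd (congrArg Subtype.val this)
  have hmem : ∀ c ∈ K, 0 < (p c).1 ∧ (p c).1 ≤ M ∧ a * (p c).1 ≤ (p c).2 ∧
      (p c).2 < (a + τ) * (p c).1 ∧ (p c).1.Coprime (p c).2 := by
    intro c hc
    have := hpP c hc
    simp only [hP, Finset.mem_sigma, Finset.mem_Ioc, Finset.mem_filter, Finset.mem_Ico] at this
    tauto
  have hs : ∀ c, ∃ x' y' : ℤ, c ∈ K →
      x' * (p c).1 - (p c).2 * y' = 1 ∧ (M : ℤ) - (p c).1 < y' ∧ y' ≤ M := by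
    intro c
    by_cases hc : c ∈ K
    · obtain ⟨x', y', h⟩ := farey_succ M (hmem c hc).2.2.2.2 (hmem c hc).1
      exact ⟨x', y', fun _ => h⟩
    · exact ⟨0, 0, fun h => absurd h hc⟩
  choose x' y' hxy using hs
  -- cones belonging to fractions in increasing order are disjoint
  have hlt : ∀ c ∈ K, ∀ d ∈ K, ((p c).2 : ℤ) * (p d).1 < (p d).2 * (p c).1 →
      ∀ z ∈ cone (p c).2 (p c).1 (x' c) (y' c) N, z ∉ cone (p d).2 (p d).1 (x' d) (y' d) N := by
    rintro c hc d hd' hlt z ⟨z1, _, _, z4⟩ ⟨_, _, w3, _⟩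
    obtain ⟨e1, e2, e3⟩ := hxy c hc
    have m1 := hmem c hc
    have m2 := hmem d hd'
    have hg := farey_gap e1 (by exact_mod_cast m1.1) e2 (by exact_mod_cast m1.2.1)
      (by exact_mod_cast m2.2.1) hlt
    have hgr : (x' c : ℝ) * (p d).1 ≤ (p d).2 * y' c := by exact_mod_cast hg
    have hy1 : (0 : ℝ) < y' c := by
      have : (0 : ℤ) < y' c := by
        have : ((p c).1 : ℤ) ≤ M := by exact_mod_cast m1.2.1
        omega
      exact_mod_cast this
    have hy2 : (0 : ℝ) < (p d).1 := by exact_mod_cast m2.1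
    push_cast at w3
    nlinarith [mul_lt_mul_of_pos_right z4 hy2, mul_lt_mul_of_pos_right w3 hy1,
      mul_le_mul_of_nonneg_right hgr z1.le]
  have hall := Placed.iUnion hK (fun c => cone (p c).2 (p c).1 (x' c) (y' c) N) ?_ ?_
  · refine hall.mono ?_
    rintro z ⟨c, hc, z1, z2, z3, z4⟩
    obtain ⟨e1, e2, e3⟩ := hxy c hc
    obtain ⟨m1, m2, m3, m4, m5⟩ := hmem c hc
    have m1r : (0 : ℝ) < (p c).1 := by exact_mod_cast m1
    have m3r : (a : ℝ) * (p c).1 ≤ (p c).2 := by exact_mod_cast m3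
    have hy0 : (0 : ℤ) < y' c := by
      have : ((p c).1 : ℤ) ≤ M := by exact_mod_cast m2
      omega
    have hy1 : (0 : ℝ) < y' c := by exact_mod_cast hy0
    have hg := farey_gap (x₂ := (a + τ : ℕ)) (y₂ := 1) e1 (by exact_mod_cast m1) e2
      (by exact_mod_cast m2) (by omega) (by rw [mul_one]; exact_mod_cast m4)
    have hgr : (x' c : ℝ) ≤ (a + τ : ℕ) * y' c := by
      rw [mul_one] at hg; exact_mod_cast hg
    push_cast at z3
    refine ⟨z1, z2, ?_, ?_⟩
    · have : (a : ℝ) * z.2 * (p c).1 < z.1 * (p c).1 := by nlinarith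
      exact lt_of_mul_lt_mul_right this m1r.le
    · have : z.1 * y' c < (a + τ : ℕ) * z.2 * y' c := by nlinarith
      exact lt_of_mul_lt_mul_right this hy1.le
  · intro c hc
    obtain ⟨e1, e2, e3⟩ := hxy c hc
    obtain ⟨m1, m2, m3, m4, m5⟩ := hmem c hc
    have : ((p c).1 : ℤ) ≤ M := by exact_mod_cast m2
    exact place_cone (hK hc) ht hN (hd c hc) e1 (by exact_mod_cast m1) this (by omega) e3
  · intro c hc d hd' hcd z hz hzd
    rcases lt_trichotomy (((p c).2 : ℤ) * (p d).1) ((p d).2 * (p c).1) with h | h | h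
    · exact hlt c hc d hd' h z hz hzd
    · -- equal fractions in lowest terms coincide
      have m1 := hmem c hc
      have m2 := hmem d hd'
      have h' : (p c).2 * (p d).1 = (p d).2 * (p c).1 := by exact_mod_cast h
      have d1 : (p c).1 ∣ (p d).1 := m1.2.2.2.2.dvd_of_dvd_mul_left ⟨(p d).2, by rw [h']; ring⟩
      have d2 : (p d).1 ∣ (p c).1 := m2.2.2.2.2.dvd_of_dvd_mul_left ⟨(p c).2, by rw [← h']; ring⟩
      have e := Nat.dvd_antisymm d1 d2
      have e2 : (p c).2 = (p d).2 := by
        rw [e] at h'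
        exact Nat.eq_of_mul_eq_mul_right m2.1 h'
      exact hinj c hc d hd' hcd (Sigma.ext e (heq_of_eq e2))
    · exact hlt d hd' c hc h z hzd hz
end TreeDraw

namespace TreeDraw

variable {V : Type} [Fintype V] [DecidableEq V] {T : RTree V}

/-! ### Stars: all subtrees of a vertex that have size at most `A` -/

/-- Several families of subtrees, the `i`-th one consisting of trees that fit into a square of side
`t i - 1`, share a wedge. -/
theorem classes {v : V} {K : Finset V} (hK : K ⊆ T.kids v) (cls : V → ℕ) (t : ℕ → ℕ) (a m N : ℕ)
    (hN : 1 ≤ N) (hcls : ∀ c ∈ K, cls c < m) (ht : ∀ c ∈ K, 1 ≤ t (cls c))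
    (htN : ∀ c ∈ K, 2 * t (cls c) ≤ N)
    (hd : ∀ c ∈ K, Draw T c (box (t (cls c) - 1) (t (cls c) - 1))) :
    ∃ τ, N ^ 2 * τ ≤ m * N ^ 2 + 256 * ∑ c ∈ K, t (cls c) ^ 2 ∧
      Placed T v K (wedge a (a + τ) N) := by
  induction m generalizing K with
  | zero =>
    have : K = ∅ := Finset.eq_empty_of_forall_notMem fun c hc => by simpa using hcls c hc
    subst this
    exact ⟨0, by simp, Placed.empty _ _⟩
  | succ m ih =>
    set K₁ := K.filter fun c => cls c < m with hK₁
    set K₂ := K.filter fun c => ¬ cls c < m with hK₂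
    have hu : K₁ ∪ K₂ = K := Finset.filter_union_filter_not_eq _ _
    have s₁ : K₁ ⊆ K := Finset.filter_subset _ _
    have s₂ : K₂ ⊆ K := Finset.filter_subset _ _
    obtain ⟨τ, h1, h2⟩ := ih (s₁.trans hK) (fun c hc => (Finset.mem_filter.1 hc).2)
      (fun c hc => ht c (s₁ hc)) (fun c hc => htN c (s₁ hc)) (fun c hc => hd c (s₁ hc))
    have e₂ : ∀ c ∈ K₂, cls c = m := fun c hc => by
      have h3 := (Finset.mem_filter.1 hc).2
      have h4 := hcls c (s₂ hc)
      omega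
    have hsum : ∑ c ∈ K₁, t (cls c) ^ 2 + K₂.card * t m ^ 2 = ∑ c ∈ K, t (cls c) ^ 2 := by
      rw [← Finset.sum_filter_add_sum_filter_not K (fun c => cls c < m)]
      congr 1
      rw [← smul_eq_mul, ← Finset.sum_const]
      exact Finset.sum_congr rfl fun c hc => by rw [e₂ c hc]
    set σ := 256 * (K₂.card * t m ^ 2) / N ^ 2 + 1 with hσ
    have hNN : 0 < N ^ 2 := by positivity
    have hσ1 : N ^ 2 * σ ≤ 256 * (K₂.card * t m ^ 2) + N ^ 2 := by
      rw [hσ, mul_add, mul_one]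
      exact Nat.add_le_add_right (Nat.mul_div_le _ _) _
    have hσ2 : 256 * (K₂.card * t m ^ 2) ≤ N ^ 2 * σ :=
      (Nat.lt_mul_div_succ _ hNN).le
    clear_value σ
    refine ⟨τ + σ, by nlinarith, ?_⟩
    have h3 : Placed T v K₂ (wedge (a + τ) (a + τ + σ) N) := by
      rcases K₂.eq_empty_or_nonempty with he | ⟨c, hc⟩
      · rw [he]; exact Placed.empty _ _
      have ht' := ht c (s₂ hc)
      have htN' := htN c (s₂ hc)
      rw [e₂ c hc] at ht' htN'
      set M := N / (2 * t m) with hM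
      have hM1 : 2 * t m * M ≤ N := Nat.mul_div_le _ _
      have hM2 : N < 2 * t m * (M + 1) := Nat.lt_mul_div_succ _ (by omega)
      have hM3 : 1 ≤ M := Nat.div_pos htN' (by omega)
      have hM4 : N ≤ 4 * t m * M := by nlinarith
      have := farey (τ := σ) (s₂.trans hK) (a + τ) ht' hM1 ?_ (fun c hc => by
        have := hd c (s₂ hc)
        rwa [e₂ c hc] at this)
      · simpa using this
      · have h5 : N ^ 2 ≤ (4 * t m * M) ^ 2 := Nat.pow_le_pow_left hM4 2
        have h6 : 256 * (K₂.card * t m ^ 2) ≤ (4 * t m * M) ^ 2 * σ :=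
          hσ2.trans (Nat.mul_le_mul_right _ h5)
        have h7 : 0 < 16 * t m ^ 2 := by positivity
        refine Nat.le_of_mul_le_mul_left ?_ h7
        nlinarith
    have h4 := h2.union h3 (by rw [hu]; exact hK) (by
      rintro z ⟨h1, h2, h3, h4⟩ ⟨_, _, h5, _⟩
      exact absurd (h4.trans h5) (lt_irrefl _))
    rw [hu] at h4
    refine h4.mono ?_
    rintro z (⟨h1, h2, h3, h4⟩ | ⟨h1, h2, h3, h4⟩)
    · refine ⟨h1, h2, h3, h4.trans_le ?_⟩
      have : ((a + τ : ℕ) : ℝ) ≤ (a + (τ + σ) : ℕ) := by exact_mod_cast (by omega)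
      exact mul_le_mul_of_nonneg_right this h1.le
    · refine ⟨h1, h2, lt_of_le_of_lt ?_ h3, by rwa [← add_assoc]⟩
      have : (a : ℝ) ≤ (a + τ : ℕ) := by exact_mod_cast (by omega)
      exact mul_le_mul_of_nonneg_right this h1.le

variable (T) in
/-- Every subtree of size `s ≤ 2 ^ A`, where `L ≤ A ≤ min w (2 ^ L)`, can be drawn with its root in
the upper left corner of a box of width `4 A` and height about `(s / A + 1) F`. -/
def Good (L w F : ℕ) : Prop := ∀ (v : V) (A H : ℕ), L ≤ A → A ≤ w → A ≤ 2 ^ L → T.sz v ≤ 2 ^ A →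
  (T.sz v + A) * F ≤ H * A → Draw T v (box (4 * A) H)

/-- If `Good L w F` holds, then a tree of size `s < w` fits into a square of side `O(√(s F))`,
where the side depends only on the binary logarithm of `s`. While `s` is at most about `F` the
drawing `small` in a square of side `O(s)` does; for larger `s` the hypothesis is applied with width
`A ≈ √(s F)`, which makes the height comparable to the width. -/
theorem exists_square {L w F : ℕ} (hF : L ≤ F) (hF1 : 1 ≤ F) (hP : Good T L w F) :
    ∃ t : ℕ → ℕ, ∀ c : V, T.sz c < w → T.sz c < 2 ^ L →
      (1 ≤ t (Nat.log 2 (T.sz c)) ∧ t (Nat.log 2 (T.sz c)) ≤ 2 * T.sz c ∧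
        t (Nat.log 2 (T.sz c)) ^ 2 ≤ 512 * (T.sz c * F)) ∧
      (t (Nat.log 2 (T.sz c)) ≤ 64 * F ∨ 64 * F < 2 * T.sz c) ∧
      Draw T c (box (t (Nat.log 2 (T.sz c)) - 1) (t (Nat.log 2 (T.sz c)) - 1)) := by
  refine ⟨fun i => if 2 ^ (i + 1) ≤ 64 * F then 2 ^ (i + 1) else
    Nat.sqrt (64 * (2 ^ (i + 1) * F)) + 1, fun c hw hL => ?_⟩
  beta_reduce
  have h0 := T.sz_pos c
  set s := T.sz c with hs
  have hlog1 : s < 2 ^ (Nat.log 2 s + 1) := Nat.lt_pow_succ_log_self (by norm_num) _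
  have hlog2 : 2 ^ (Nat.log 2 s + 1) ≤ 2 * s := by
    rw [pow_succ, mul_comm]
    exact Nat.mul_le_mul_left _ (Nat.pow_log_le_self _ (by omega))
  have hlog3 : Nat.log 2 s < 2 ^ Nat.log 2 s := Nat.lt_two_pow_self
  have hlog4 : 2 ^ (Nat.log 2 s + 1) = 2 * 2 ^ Nat.log 2 s := by rw [pow_succ, mul_comm]
  have hdraw := small (T := T) c (Nat.log 2 s) hlog1
  generalize 2 ^ (Nat.log 2 s + 1) = M at *
  by_cases hM : M ≤ 64 * F
  · simp only [hM, if_true, true_or]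
    refine ⟨⟨by omega, hlog2, by nlinarith⟩, trivial, hdraw.mono (box_mono ?_ ?_)⟩ <;> omega
  · simp only [hM, if_false]
    push Not at hM
    set q := Nat.sqrt (64 * (M * F)) with hq
    have hq1 : q * q ≤ 64 * (M * F) := Nat.sqrt_le _
    have hq2 : 64 * (M * F) < (q + 1) * (q + 1) := Nat.lt_succ_sqrt _
    have hqM : q < M := by
      by_contra h
      push Not at h
      nlinarith
    have hq3 : 64 * F ≤ q := by
      by_contra h
      push Not at h
      have : (q + 1) * (q + 1) ≤ (64 * F) * (64 * F) := Nat.mul_le_mul h h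
      nlinarith
    refine ⟨⟨by omega, by omega, ?_⟩, Or.inr (by omega), ?_⟩
    · nlinarith
    · have ha1 : 4 * (q / 4) ≤ q := Nat.mul_div_le _ _
      have ha2 : q < 4 * (q / 4 + 1) := Nat.lt_mul_div_succ _ (by norm_num)
      set a := q / 4 with ha
      have ha3 : 16 * F ≤ a := by omega
      refine (hP c a q (by omega) (by omega) (by omega)
        (hL.le.trans (Nat.pow_le_pow_right (by norm_num) (by omega))) ?_).mono
        (box_mono (by omega) (by omega))
      have h5 : (q + 1) * (q + 1) ≤ (4 * (a + 1)) * (4 * (a + 1)) :=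
        Nat.mul_le_mul (by omega) (by omega)
      have h6 : 4 * (M * F) ≤ (a + 1) * (a + 1) := by nlinarith
      have h7 : 4 * a * a ≤ q * a := Nat.mul_le_mul_right _ ha1
      have h8 : (s + a) * F ≤ 2 * (M * F) := by
        have : s + a ≤ 2 * M := by omega
        nlinarith
      rw [← hs]
      have ha4 : 16 ≤ a := by omega
      nlinarith

end TreeDraw

namespace TreeDraw

variable {V : Type} [Fintype V] [DecidableEq V] {T : RTree V}

/-- Directions and distances available to the part of a drawing that lies to the right of `v`
within width `W` and reaches down to level `H`. -/
def starZone (W H : ℕ) : Set (ℝ × ℝ) := {z | 0 < z.1 ∧ z.1 ≤ W ∧ 0 < z.2 ∧ z.2 ≤ H * min z.1 1}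

/-- `y` is at most `h` times `min x 1` as soon as it is at most both `h` and `h x`. -/
theorem le_mul_min {x y h : ℝ} (h1 : y ≤ h) (h2 : y ≤ h * x) : y ≤ h * min x 1 := by
  rcases le_total x 1 with hx | hx
  · rwa [min_eq_left hx]
  · rwa [min_eq_right hx, mul_one]

/-- Arithmetic behind the subtrees of size `s` whose square side `u` exceeds `N / 2`: they are drawn
in a box of width `4 (2 s F / N + 1)` and height `N`. -/
theorem hook_width {L F N s u : ℕ} (hF : L ≤ F) (hF1 : 1 ≤ F) (hN : 131072 * F ≤ N)
    (h1 : N < 2 * u) (h2 : u ≤ 2 * s) (h3 : u ^ 2 ≤ 512 * (s * F)) :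
    L ≤ 2 * (s * F) / N + 1 ∧ 2 * (s * F) / N + 1 ≤ s ∧
      (s + (2 * (s * F) / N + 1)) * F ≤ N * (2 * (s * F) / N + 1) ∧
      N * (4 * (2 * (s * F) / N + 1) + 1) ≤ 15 * (s * F) := by
  have hN0 : 0 < N := by omega
  have e1 : 2 * (s * F) < N * (2 * (s * F) / N + 1) := Nat.lt_mul_div_succ _ hN0
  have e2 : N * (2 * (s * F) / N + 1) ≤ 2 * (s * F) + N := by
    rw [mul_add, mul_one]
    exact Nat.add_le_add_right (Nat.mul_div_le _ _) _
  have e3 : 2 * (s * F) / N + 1 ≤ s := by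
    have : 2 * (s * F) / N ≤ s / 2 := by
      refine Nat.div_le_of_le_mul ?_
      have h13 : s ≤ 4 * (s / 2) := by omega
      have h14 : 4 * F * (s / 2) ≤ N * (s / 2) := Nat.mul_le_mul_right _ (by omega)
      have h15 : 2 * F * s ≤ 2 * F * (4 * (s / 2)) := Nat.mul_le_mul_left _ h13
      have h16 : 8 * F * (s / 2) ≤ N * (s / 2) := Nat.mul_le_mul_right _ (by omega)
      nlinarith
    omega
  generalize 2 * (s * F) / N + 1 = a at *
  have e4 : N * N < 2048 * (s * F) := by
    have : N * N < (2 * u) * (2 * u) := Nat.mul_self_lt_mul_self h1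
    nlinarith
  have e5 : N ≤ s * F := by
    have h5 : 131072 * N ≤ N * N := Nat.mul_le_mul_right _ (by omega)
    omega
  have e6 : F ≤ a := by
    by_contra h
    have h5 : N * a ≤ N * F := Nat.mul_le_mul_left _ (by omega)
    have h6 : N * (131072 * F) ≤ N * N := Nat.mul_le_mul_left _ hN
    have h7 : N * (131072 * F) = 131072 * (N * F) := by ring
    omega
  refine ⟨hF.trans e6, e3, ?_, ?_⟩
  · have : (s + a) * F ≤ (2 * s) * F := Nat.mul_le_mul_right _ (by omega)
    have h7 : (2 * s) * F = 2 * (s * F) := by ring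
    omega
  · have : N * (4 * a + 1) = 4 * (N * a) + N := by ring
    omega

set_option maxHeartbeats 1000000 in
/-- The subtrees of size less than `A / b` below `v`, of total size `s`, fit next to `v` within width
`3 A` and height `H` of order `(s / A + 1) L ^ 2 F`. A subtree of size `s'` lives in a square of side
`O(√(s' F))`, so that the square areas sum to `O(s F)` and a wedge reaching down to row
`N ≈ s F / A` accommodates all squares that are small compared with `N`. A subtree whose square is
too large is drawn in a box of height `N` instead, and these boxes hang from row `N + 1`. If `N` is
not small compared with `A`, the wedge is turned by the diagonal reflection and reaches to column
`A`, which is at least twice the side of every square. -/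
theorem star_light {L w F A b : ℕ} (hL : 2 ≤ L) (hb : 4 ≤ b) (hF : L ≤ F) (hP : Good T L w F)
    (hA : L ≤ A) (hAw : A ≤ b * w) (hA2 : A ≤ 2 ^ L) {v : V} {K : Finset V} (hK : K ⊆ T.kids v)
    (hKs : ∀ c ∈ K, b * T.sz c < A) {s H : ℕ} (hs : ∑ c ∈ K, T.sz c ≤ s)
    (hH : 786432 * (L ^ 2 * ((s + A) * F)) ≤ H * A) : Placed T v K (starZone (3 * A) H) := by
  obtain ⟨t, ht⟩ := exists_square hF (by omega) hP
  have hw : ∀ c ∈ K, T.sz c < w := fun c hc => by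
    by_contra h
    have h1 := Nat.mul_le_mul_left b (not_lt.1 h)
    have := hKs c hc
    omega
  have hsA : ∀ c ∈ K, 4 * T.sz c < A := fun c hc => by
    have := hKs c hc
    nlinarith [T.sz_pos c]
  have hs2 : ∀ c ∈ K, T.sz c < 2 ^ L := fun c hc => by
    have := hsA c hc
    omega
  have hcls : ∀ c ∈ K, Nat.log 2 (T.sz c) < L := fun c hc =>
    Nat.log_lt_of_lt_pow (by have := T.sz_pos c; omega) (hs2 c hc)
  have hsq : ∀ K' ⊆ K, ∑ c ∈ K', t (Nat.log 2 (T.sz c)) ^ 2 ≤ 512 * (s * F) := by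
    intro K' hK'
    calc ∑ c ∈ K', t (Nat.log 2 (T.sz c)) ^ 2
        ≤ ∑ c ∈ K', 512 * (T.sz c * F) := Finset.sum_le_sum fun c hc =>
          (ht c (hw c (hK' hc)) (hs2 c (hK' hc))).1.2.2
      _ ≤ ∑ c ∈ K, 512 * (T.sz c * F) := Finset.sum_le_sum_of_subset hK'
      _ = 512 * ((∑ c ∈ K, T.sz c) * F) := by rw [Finset.sum_mul, Finset.mul_sum]
      _ ≤ 512 * (s * F) := by gcongr
  have hA0 : 0 < A := by omega
  have hL2 : 4 ≤ L ^ 2 := by nlinarith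
  set X := 131072 * ((s + A) * F) with hX
  set N := X / A + 1 with hN
  have hNX : X < A * N := Nat.lt_mul_div_succ _ hA0
  have hNX' : A * N ≤ X + A := by
    rw [hN, mul_add, mul_one]
    exact Nat.add_le_add_right (Nat.mul_div_le _ _) _
  have hNF : 131072 * F ≤ N := by
    have : A * (131072 * F) ≤ A * N := by nlinarith
    exact Nat.le_of_mul_le_mul_left this hA0
  have hXA : A ≤ X := by nlinarith
  have hHX : 6 * (L ^ 2 * X) ≤ H * A := by rw [hX]; nlinarith
  have hXs : 131072 * (s * F) ≤ X := by rw [hX]; nlinarith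
  have hH1 : 1 ≤ H := by
    by_contra h
    have : H = 0 := by omega
    subst this
    nlinarith
  clear_value N X
  -- a wedge down to row `N` loses `O(L)` slopes to rounding, that is `L N` columns
  by_cases hreg : A < N * (L + 2)
  · -- all subtrees in wedges whose rows are the columns of the drawing
    obtain ⟨τ, h1, h2⟩ := classes (T := T) (v := v) hK (fun c => Nat.log 2 (T.sz c)) t 0 L A hA0
      hcls (fun c hc => (ht c (hw c hc) (hs2 c hc)).1.1) (fun c hc => by
        have h3 := (ht c (hw c hc) (hs2 c hc)).1.2.1
        have h4 := hsA c hc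
        omega) (fun c hc => (ht c (hw c hc) (hs2 c hc)).2.2)
    have h3 := hsq K (Finset.Subset.refl _)
    have hτ : τ * A ≤ H := by
      refine Nat.le_of_mul_le_mul_right ?_ hA0
      have h4 : L * A * A ≤ L * A * (N * (L + 2)) := Nat.mul_le_mul_left _ hreg.le
      have h5 : L * (L + 2) * (A * N) ≤ (2 * L ^ 2) * (2 * X) :=
        Nat.mul_le_mul (by nlinarith) (by omega)
      have h6 : X ≤ L ^ 2 * X := Nat.le_mul_of_pos_left _ (by omega)
      have e1 : τ * A * A = A ^ 2 * τ := by ring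
      have e2 : L * A * (N * (L + 2)) = L * (L + 2) * (A * N) := by ring
      have e3 : L * A ^ 2 = L * A * A := by ring
      have e4 : 2 * L ^ 2 * (2 * X) = 4 * (L ^ 2 * X) := by ring
      omega
    refine h2.swap.mono ?_
    rintro z ⟨h4, h5, h6, h7⟩
    have hτ' : (τ : ℝ) * A ≤ H := by exact_mod_cast hτ
    have hA1 : (1 : ℝ) ≤ A := by exact_mod_cast hA0
    simp only [zero_add, Nat.cast_zero, zero_mul] at h4 h5 h6 h7
    have hτ0 : (0 : ℝ) ≤ τ := Nat.cast_nonneg _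
    refine ⟨h4, by push_cast; linarith, h6, le_mul_min ?_ ?_⟩
    · nlinarith
    · nlinarith
  · push Not at hreg
    set K₁ := K.filter fun c => 2 * t (Nat.log 2 (T.sz c)) ≤ N with hK₁
    set K₂ := K.filter fun c => ¬ 2 * t (Nat.log 2 (T.sz c)) ≤ N with hK₂
    have hu : K₁ ∪ K₂ = K := Finset.filter_union_filter_not_eq _ _
    have s₁ : K₁ ⊆ K := Finset.filter_subset _ _
    have s₂ : K₂ ⊆ K := Finset.filter_subset _ _
    have hN0 : 0 < N := by omega
    obtain ⟨τ, h1, h2⟩ := classes (T := T) (v := v) (s₁.trans hK) (fun c => Nat.log 2 (T.sz c)) t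
      (A / N + 1) L N hN0 (fun c hc => hcls c (s₁ hc))
      (fun c hc => (ht c (hw c (s₁ hc)) (hs2 c (s₁ hc))).1.1)
      (fun c hc => (Finset.mem_filter.1 hc).2)
      (fun c hc => (ht c (hw c (s₁ hc)) (hs2 c (s₁ hc))).2.2)
    have h3 := hsq K₁ s₁
    have hτ : N * τ ≤ L * N + A := by
      refine Nat.le_of_mul_le_mul_left ?_ hN0
      have e1 : N * (N * τ) = N ^ 2 * τ := by ring
      have e2 : N * (L * N + A) = L * N ^ 2 + A * N := by ring
      omega
    have hT0 : A < N * (A / N + 1) := Nat.lt_mul_div_succ _ hN0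
    have hT1 : N * (A / N + 1) ≤ A + N := by
      rw [mul_add, mul_one]
      exact Nat.add_le_add_right (Nat.mul_div_le _ _) _
    generalize A / N + 1 = T₀ at *
    have hT2 : 1 ≤ T₀ := by
      by_contra h
      have : T₀ = 0 := by omega
      subst this
      omega
    have hH2 : 2 * N + 1 ≤ H := by
      refine Nat.le_of_mul_le_mul_right ?_ hA0
      have e1 : (2 * N + 1) * A = 2 * (A * N) + A := by ring
      have e2 : X ≤ L ^ 2 * X := Nat.le_mul_of_pos_left _ (by omega)
      omega
    -- the remaining subtrees hang from row `N + 1`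
    have h4 : ∀ c ∈ K₂, Draw T c (box (4 * (2 * (T.sz c * F) / N + 1)) N) ∧
        N * (4 * (2 * (T.sz c * F) / N + 1) + 1) ≤ 15 * (T.sz c * F) := by
      intro c hc
      have hc' := (Finset.mem_filter.1 hc).2
      obtain ⟨⟨h5, h6, h7⟩, h8, -⟩ := ht c (hw c (s₂ hc)) (hs2 c (s₂ hc))
      have h9 := hw c (s₂ hc)
      have h10 := hs2 c (s₂ hc)
      have h11 := hsA c (s₂ hc)
      push Not at hc'
      obtain ⟨e1, e2, e3, e4⟩ := hook_width hF (by omega) hNF hc' h6 h7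
      exact ⟨hP c _ N e1 (by omega) (by omega)
        (h10.le.trans (Nat.pow_le_pow_right (by norm_num) e1)) e3, e4⟩
    have h5 := row (s₂.trans hK) _ N (N + 1) 1 (by omega) fun c hc => (h4 c hc).1
    set R := ∑ c ∈ K₂, (4 * (2 * (T.sz c * F) / N + 1) + 1) with hR
    have h6 : R ≤ A := by
      refine Nat.le_of_mul_le_mul_left ?_ hN0
      calc N * R ≤ ∑ c ∈ K₂, 15 * (T.sz c * F) := by
            rw [hR, Finset.mul_sum]
            exact Finset.sum_le_sum fun c hc => (h4 c hc).2
        _ ≤ ∑ c ∈ K, 15 * (T.sz c * F) := Finset.sum_le_sum_of_subset s₂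
        _ = 15 * ((∑ c ∈ K, T.sz c) * F) := by rw [Finset.sum_mul, Finset.mul_sum]
        _ ≤ 15 * (s * F) := by gcongr
        _ ≤ N * A := by rw [mul_comm N A]; omega
    clear_value R
    have hN1 : (1 : ℝ) ≤ N := by exact_mod_cast hN0
    have hA1 : (1 : ℝ) ≤ A := by exact_mod_cast hA0
    have r1 : (A : ℝ) < N * T₀ := by exact_mod_cast hT0
    have r2 : (T₀ + τ : ℝ) * N ≤ 3 * A := by
      have : (T₀ + τ) * N ≤ 3 * A := by nlinarith
      exact_mod_cast this
    have r3 : (1 : ℝ) ≤ T₀ := by exact_mod_cast hT2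
    have r4 : 2 * (N : ℝ) + 1 ≤ H := by exact_mod_cast hH2
    have r5 : (R : ℝ) ≤ A := by exact_mod_cast h6
    have r6 : (1 : ℝ) ≤ H := by exact_mod_cast hH1
    have h7 := h2.union h5 (by rw [hu]; exact hK) (by
      rintro z ⟨z1, z2, z3, z4⟩ ⟨_, _, _, z5⟩
      push_cast at z5
      rw [min_eq_left (by linarith)] at z5
      have : T₀ * z.2 * (N + 1) < z.1 * (N + 1) := by
        refine mul_lt_mul_of_pos_right z3 (by linarith)
      have h8 : (R : ℝ) * z.2 ≤ N * T₀ * z.2 := mul_le_mul_of_nonneg_right (by linarith) z1.le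
      have h9 : 0 < (T₀ : ℝ) * z.2 := mul_pos (by linarith) z1
      linarith)
    rw [hu] at h7
    refine h7.mono ?_
    rintro z (⟨z1, z2, z3, z4⟩ | ⟨z1, z2, z3, z4⟩)
    · have z0 : z.2 < z.1 := by
        have := mul_le_mul_of_nonneg_right r3 z1.le
        linarith
      have : (0 : ℝ) ≤ T₀ + τ := by positivity
      push_cast at z4
      refine ⟨z1.trans z0, ?_, z1, le_mul_min ?_ ?_⟩
      · have := mul_le_mul_of_nonneg_left z2 this
        push_cast
        linarith
      · linarith
      · have := mul_le_mul_of_nonneg_right r6 (z1.trans z0).le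
        linarith
    · push_cast at z2 z3 z4
      have hm : 0 < min z.2 ((N : ℝ) + 1) := lt_min z1 (by linarith)
      have hm1 : min z.2 ((N : ℝ) + 1) ≤ N + 1 := min_le_right _ _
      have hx : 0 < z.1 := by
        by_contra h
        push Not at h
        have := mul_nonpos_of_nonpos_of_nonneg h (by linarith : (0 : ℝ) ≤ N + 1)
        linarith
      refine ⟨hx, ?_, z1, le_mul_min (by linarith) ?_⟩
      · push_cast
        have : z.1 * (N + 1) ≤ A * (N + 1) := z4.trans (by
          have := mul_le_mul hm1 r5 (Nat.cast_nonneg _) (by linarith : (0 : ℝ) ≤ N + 1)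
          nlinarith)
        have := le_of_mul_le_mul_right this (by linarith)
        linarith
      · rcases le_total z.2 (N + 1) with h | h
        · rw [min_eq_left h] at z3
          nlinarith
        · rw [min_eq_right h] at z3
          have h8 : 1 ≤ z.1 := le_of_mul_le_mul_right (by linarith) (by linarith : (0 : ℝ) < N + 1)
          have := mul_le_mul_of_nonneg_left h8 (by linarith : (0 : ℝ) ≤ H)
          linarith

end TreeDraw

namespace TreeDraw

variable {V : Type} [Fintype V] [DecidableEq V] {T : RTree V}

/-- The subtrees of size at most `A` below `v`, of total size `s`, fit next to `v` within width `3 A`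
and height `H` as soon as `H` is at least `(s / A + 1) L ^ 2 F` up to a constant: those of size at
least `A / b` are stacked, as there are at most `b s / A` of them. -/
theorem star {L w F A b : ℕ} (hL : 2 ≤ L) (hb : 4 ≤ b) (hF : b * L ≤ F) (hP : Good T L w F)
    (hA : L ≤ A) (hAw : A ≤ b * w) (hA2 : A ≤ 2 ^ L) {v : V} {K : Finset V} (hK : K ⊆ T.kids v)
    (hKs : ∀ c ∈ K, T.sz c ≤ A) {s H : ℕ} (hs : ∑ c ∈ K, T.sz c ≤ s)
    (hH : 786440 * (L ^ 2 * ((s + A) * F)) ≤ H * A) : Placed T v K (starZone (3 * A) H) := by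
  have hF' : L ≤ F := by nlinarith
  have hA0 : 0 < A := by omega
  set K₁ := K.filter fun c => b * T.sz c < A with hK₁
  set K₂ := K.filter fun c => ¬ b * T.sz c < A with hK₂
  have hu : K₁ ∪ K₂ = K := Finset.filter_union_filter_not_eq _ _
  have s₁ : K₁ ⊆ K := Finset.filter_subset _ _
  have s₂ : K₂ ⊆ K := Finset.filter_subset _ _
  set X := 786432 * (L ^ 2 * ((s + A) * F)) with hX
  have h1 : X ≤ (X / A + 1) * A := by
    rw [mul_comm]
    exact (Nat.lt_mul_div_succ _ hA0).le
  have h2 : (X / A + 1) * A ≤ X + A := by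
    rw [add_mul, one_mul]
    exact Nat.add_le_add_right (Nat.div_mul_le_self _ _) _
  have hl := star_light hL hb hF' hP hA hAw hA2 (s₁.trans hK)
    (fun c hc => (Finset.mem_filter.1 hc).2) ((Finset.sum_le_sum_of_subset s₁).trans hs) h1
  generalize X / A + 1 = H₁ at *
  have hh := column (T := T) (s₂.trans hK) (fun _ => L) A (H₁ + 1) fun c hc => by
    have h3 := hKs c (s₂ hc)
    refine (small c L ?_).mono (box_mono (by omega) le_rfl)
    have : 2 ^ L < 2 ^ (L + 1) := Nat.pow_lt_pow_right (by norm_num) (by omega)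
    omega
  rw [Finset.sum_const, smul_eq_mul] at hh
  have h3 : K₂.card * A ≤ b * s := by
    calc K₂.card * A = ∑ c ∈ K₂, A := by rw [Finset.sum_const, smul_eq_mul]
      _ ≤ ∑ c ∈ K₂, b * T.sz c := Finset.sum_le_sum fun c hc => not_lt.1 (Finset.mem_filter.1 hc).2
      _ ≤ ∑ c ∈ K, b * T.sz c := Finset.sum_le_sum_of_subset s₂
      _ = b * ∑ c ∈ K, T.sz c := by rw [Finset.mul_sum]
      _ ≤ b * s := Nat.mul_le_mul_left _ hs
  have h4 : H₁ + K₂.card * (L + 1) ≤ H := by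
    refine Nat.le_of_mul_le_mul_right ?_ hA0
    have e1 : K₂.card * (L + 1) * A ≤ 2 * (s * F) := by
      calc K₂.card * (L + 1) * A = (L + 1) * (K₂.card * A) := by ring
        _ ≤ (2 * L) * (b * s) := Nat.mul_le_mul (by omega) h3
        _ = 2 * (s * (b * L)) := by ring
        _ ≤ 2 * (s * F) := by gcongr
    have e2 : s * F + A ≤ (s + A) * F := by
      have : A ≤ A * F := Nat.le_mul_of_pos_right _ (by omega)
      nlinarith
    have e3 : (s + A) * F ≤ L ^ 2 * ((s + A) * F) := Nat.le_mul_of_pos_left _ (by positivity)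
    have e4 : (H₁ + K₂.card * (L + 1)) * A = H₁ * A + K₂.card * (L + 1) * A := by ring
    omega
  have h5 := hl.union hh (by rw [hu]; exact hK) (by
    rintro z ⟨z1, z2, z3, z4⟩ ⟨_, _, z5, _⟩
    push_cast at z5
    have : 0 < min z.1 1 := lt_min z1 one_pos
    linarith)
  rw [hu] at h5
  refine h5.mono ?_
  have h6 : (H₁ : ℝ) + K₂.card * (L + 1) ≤ H := by exact_mod_cast h4
  have hA1 : (1 : ℝ) ≤ A := by exact_mod_cast hA0
  have hc : (0 : ℝ) ≤ K₂.card * (L + 1) := by positivity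
  rintro z (⟨z1, z2, z3, z4⟩ | ⟨z1, z2, z3, z4⟩)
  · have : 0 < min z.1 1 := lt_min z1 one_pos
    refine ⟨z1, z2, z3, z4.trans (mul_le_mul_of_nonneg_right ?_ this.le)⟩
    linarith
  · have hm : 0 < min z.1 1 := lt_min z1 one_pos
    push_cast at z3 z4 ⊢
    refine ⟨z1, by push_cast; linarith, ?_, z4.trans (mul_le_mul_of_nonneg_right ?_ hm.le)⟩
    · exact lt_of_lt_of_le (mul_pos (by positivity) hm) z3
    · linarith

end TreeDraw

namespace TreeDraw

variable {V : Type} [Fintype V] [DecidableEq V] {T : RTree V}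

/-! ### The skeleton: subtrees of size larger than `A` -/

variable (T) in
/-- The children of `v` whose subtrees have size at most `A`. -/
noncomputable def lit (A : ℕ) (v : V) : Finset V := (T.kids v).filter fun c => T.sz c ≤ A

variable (T) in
/-- The children of `v` whose subtrees have size larger than `A`. -/
noncomputable def big (A : ℕ) (v : V) : Finset V := (T.kids v).filter fun c => ¬ T.sz c ≤ A

variable (T) in
/-- The total size of the subtrees of size at most `A` below `v`. -/
noncomputable def lsz (A : ℕ) (v : V) : ℕ := ∑ c ∈ lit T A v, T.sz c

theorem lit_union_big (A : ℕ) (v : V) : lit T A v ∪ big T A v = T.kids v :=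
  Finset.filter_union_filter_not_eq _ _

theorem lit_subset (A : ℕ) (v : V) : lit T A v ⊆ T.kids v := Finset.filter_subset _ _

theorem big_subset (A : ℕ) (v : V) : big T A v ⊆ T.kids v := Finset.filter_subset _ _

theorem sz_le_of_lit {A : ℕ} {v c : V} (h : c ∈ lit T A v) : T.sz c ≤ A := (Finset.mem_filter.1 h).2

theorem lt_sz_of_big {A : ℕ} {v c : V} (h : c ∈ big T A v) : A < T.sz c :=
  not_le.1 (Finset.mem_filter.1 h).2

theorem sz_split (A : ℕ) (v : V) : T.sz v = 1 + lsz T A v + ∑ c ∈ big T A v, T.sz c := by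
  rw [T.sz_eq v, ← Finset.sum_filter_add_sum_filter_not (T.kids v) (fun c => T.sz c ≤ A), add_assoc]
  rfl

variable (T) in
/-- All subtrees of size at most `A` below any `v` can be placed to the right of `v` within width
`3 A` and a height proportional to their total size. -/
def StarOK (A G : ℕ) : Prop := ∀ (v : V) (K : Finset V) (s H : ℕ), K ⊆ T.kids v →
  (∀ c ∈ K, T.sz c ≤ A) → ∑ c ∈ K, T.sz c ≤ s → (s + A) * G ≤ H * A →
    Placed T v K (starZone (3 * A) H)

variable (T) in
/-- The subtree rooted at `v` fits into a box of width `3 A + ℓ`, where `ℓ` bounds the binary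
logarithm of its size `s`, and height `(2 s / A - 1) G`. The term `- G` pays for the places where
the drawing leaves its leftmost column. -/
def Tower (A G : ℕ) (v : V) : Prop := ∀ ℓ H : ℕ, T.sz v ≤ 2 ^ ℓ → A < T.sz v →
  2 * (G * T.sz v) ≤ H * A + G * A → Draw T v (box (3 * A + ℓ) H)

/-- A star at `v`: the light subtrees next to `v`, all heavy subtrees but a largest one stacked in
column `1`, and the largest one at the bottom in column `0`. -/
theorem star_heavy {A G G' : ℕ} (hA : 1 ≤ A) (hS : StarOK T A G) {v : V} {ℓ H : ℕ}
    (hℓ : T.sz v ≤ 2 ^ ℓ) (hQ : ∀ c ∈ big T A v, Tower T A G' c)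
    (hH : (lsz T A v + A) * G + A + 2 * (G' * ∑ c ∈ big T A v, T.sz c) +
      2 * (A * (big T A v).card) ≤ H * A + G' * A * (big T A v).card) :
    Draw T v (box (3 * A + ℓ) H) := by
  have hA0 : 0 < A := hA
  obtain ⟨H₀, h0, h0'⟩ : ∃ H₀, (lsz T A v + A) * G ≤ H₀ * A ∧
      H₀ * A ≤ (lsz T A v + A) * G + A := by
    refine ⟨(lsz T A v + A) * G / A + 1, ?_, ?_⟩
    · rw [mul_comm _ A]
      exact (Nat.lt_mul_div_succ _ hA0).le
    · rw [add_mul, one_mul]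
      exact Nat.add_le_add_right (Nat.div_mul_le_self _ _) _
  have h1 := hS v (lit T A v) _ H₀ (lit_subset A v) (fun c hc => sz_le_of_lit hc) le_rfl h0
  have hA1 : (1 : ℝ) ≤ A := by exact_mod_cast hA
  rcases (big T A v).eq_empty_or_nonempty with he | hne
  · have hk := lit_union_big (T := T) A v
    rw [he, Finset.union_empty] at hk
    rw [he] at hH
    simp only [Finset.sum_empty, Finset.card_empty, mul_zero, add_zero] at hH
    have h2 := hS v (lit T A v) _ H (lit_subset A v) (fun c hc => sz_le_of_lit hc) le_rfl
      (by omega : (lsz T A v + A) * G ≤ H * A)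
    rw [hk] at h2
    refine h2.draw ?_
    rintro z ⟨z1, z2, z3, z4⟩
    refine ⟨⟨z1.le, z2.trans ?_, z3.le, z4.trans ?_⟩, ?_⟩
    · push_cast
      linarith [(Nat.cast_nonneg ℓ : (0 : ℝ) ≤ ℓ)]
    · have := mul_le_mul_of_nonneg_left (min_le_right z.1 1) (Nat.cast_nonneg H : (0 : ℝ) ≤ H)
      linarith
    · rintro rfl
      exact lt_irrefl _ z1
  · obtain ⟨g, hg, hmax⟩ := Finset.exists_max_image _ T.sz hne
    set B := (big T A v).erase g with hB
    have hBk : B ⊆ T.kids v := (Finset.erase_subset _ _).trans (big_subset A v)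
    -- the least admissible heights of the heavy subtrees
    have hh : ∀ c ∈ big T A v, ∃ h, 2 * (G' * T.sz c) ≤ h * A + G' * A ∧
        h * A + G' * A ≤ 2 * (G' * T.sz c) + A := by
      intro c hc
      have h2 := lt_sz_of_big hc
      have h3 : G' * A ≤ G' * T.sz c := Nat.mul_le_mul_left _ h2.le
      obtain ⟨d, hd⟩ := Nat.exists_eq_add_of_le (h3.trans (Nat.le_mul_of_pos_left _ two_pos))
      refine ⟨d / A + 1, ?_, ?_⟩
      · have := (Nat.lt_mul_div_succ d hA0)
        rw [mul_comm] at this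
        rw [hd]
        omega
      · have := Nat.div_mul_le_self d A
        rw [hd, add_mul, one_mul]
        omega
    choose! h hh1 hh2 using hh
    have hℓ1 : ∀ c ∈ B, T.sz c ≤ 2 ^ (ℓ - 1) ∧ 1 ≤ ℓ := by
      intro c hc
      have hc' := Finset.mem_of_mem_erase hc
      have h2 := hmax c hc'
      have h3 : T.sz c + T.sz g ≤ ∑ d ∈ big T A v, T.sz d := by
        rw [← Finset.add_sum_erase _ _ hg, add_comm]
        exact Nat.add_le_add_left
          (Finset.single_le_sum (f := T.sz) (fun _ _ => Nat.zero_le _) hc) _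
      have h4 := sz_split (T := T) A v
      have h5 := T.sz_pos c
      cases ℓ with
      | zero => simp at hℓ; omega
      | succ ℓ =>
        rw [pow_succ] at hℓ
        simp only [Nat.add_sub_cancel]
        omega
    have h2 := column (T := T) hBk h (3 * A + (ℓ - 1)) (H₀ + 1) fun c hc =>
      hQ c (Finset.mem_of_mem_erase hc) _ _ (hℓ1 c hc).1
        (lt_sz_of_big (Finset.mem_of_mem_erase hc)) (hh1 c (Finset.mem_of_mem_erase hc))
    have h3 := hQ g hg ℓ (h g) (by
      have := T.sz_kid_lt (big_subset A v hg)
      omega) (lt_sz_of_big hg) (hh1 g hg)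
    -- without heavy subtrees in column `1` the zone of the column is empty
    have hℓ2 : B.Nonempty → 1 ≤ ℓ := fun ⟨c, hc⟩ => (hℓ1 c hc).2
    have hsum : (∑ c ∈ big T A v, (h c + 1)) * A + G' * A * (big T A v).card ≤
        2 * (G' * ∑ c ∈ big T A v, T.sz c) + 2 * (A * (big T A v).card) := by
      rw [Finset.sum_mul, Finset.mul_sum, Finset.mul_sum, Finset.card_eq_sum_ones, Finset.mul_sum,
        Finset.mul_sum, Finset.mul_sum, ← Finset.sum_add_distrib, ← Finset.sum_add_distrib]
      refine Finset.sum_le_sum fun c hc => ?_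
      have := hh2 c hc
      rw [add_mul]
      omega
    rw [← Finset.add_sum_erase _ _ hg, ← hB] at hsum
    set S := ∑ c ∈ B, (h c + 1) with hS'
    have hfin : H₀ + S + 1 + h g ≤ H := by
      refine Nat.le_of_mul_le_mul_right ?_ hA0
      have e1 : (H₀ + S + 1 + h g) * A = H₀ * A + (h g + 1 + S) * A := by ring
      omega
    have h4 := Draw.translate_down (big_subset A v hg) h3 0 (H₀ + S + 1) (by omega)
      (E := {z | 0 ≤ z.1 ∧ z.1 ≤ 3 * A + ℓ ∧ 0 < z.2 ∧ z.2 ≤ H ∧ (z.2 < H₀ + S + 1 → z.1 = 0)})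
      (fun z hz => hz.2.2.1) (by
        have hfin' : (H₀ : ℝ) + S + 1 + h g ≤ H := by exact_mod_cast hfin
        rintro z ⟨z1, z2, z3, z4⟩ -
        push_cast at z2 ⊢
        refine ⟨by simpa using z1, by simpa using z2, by positivity, ?_, ?_⟩
        · simp only; linarith
        · intro h; simp only at h; linarith)
      (by
        intro t ht0 ht1
        have hfin' : (H₀ : ℝ) + S + 1 + h g ≤ H := by exact_mod_cast hfin
        have hp : (0 : ℝ) < H₀ + S + 1 := by positivity
        have hq : (0 : ℝ) ≤ h g := Nat.cast_nonneg _
        push_cast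
        refine ⟨by simp, by simp; positivity, by positivity, ?_, fun _ => by simp⟩
        simp only
        nlinarith)
    have h5 := h1.union h2 ((Finset.union_subset_union_right (Finset.erase_subset _ _)).trans
      (lit_union_big A v).subset) (by
        rintro z ⟨z1, z2, z3, z4⟩ ⟨_, _, z5, _⟩
        push_cast at z5
        have : 0 < min z.1 1 := lt_min z1 one_pos
        linarith)
    have hk : lit T A v ∪ B ∪ {g} = T.kids v := by
      rw [Finset.union_assoc, Finset.union_comm B, ← Finset.insert_eq, hB, Finset.insert_erase hg,
        lit_union_big]
    have hm : ∀ z : ℝ × ℝ, 0 < z.1 → ∀ y : ℝ, 0 ≤ y → y * min z.1 1 ≤ y := fun z hz y hy => by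
      have := mul_le_mul_of_nonneg_left (min_le_right z.1 1) hy
      linarith
    have hS0 : (0 : ℝ) ≤ S := Nat.cast_nonneg _
    have hH0 : (0 : ℝ) ≤ H₀ := Nat.cast_nonneg _
    have hg0 : (0 : ℝ) ≤ h g := Nat.cast_nonneg _
    have hl0 : (0 : ℝ) ≤ ℓ := Nat.cast_nonneg _
    have hfin' : (H₀ : ℝ) + S + 1 + h g ≤ H := by exact_mod_cast hfin
    have h6 := h5.union h4 (by rw [hk]) (by
      rintro z (⟨z1, z2, z3, z4⟩ | ⟨z1, z2, z3, z4⟩) ⟨_, _, z5, z6, z7⟩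
      · have := hm z z1 _ hH0
        exact z1.ne' (z7 (by linarith))
      · push_cast at z4
        have := hm z z1 (H₀ + S) (by positivity)
        exact z1.ne' (z7 (by linarith)))
    rw [hk] at h6
    refine h6.draw ?_
    rintro z ((⟨z1, z2, z3, z4⟩ | ⟨z1, z2, z3, z4⟩) | ⟨z1, z2, z3, z4, z5⟩)
    · have := hm z z1 _ hH0
      refine ⟨⟨z1.le, z2.trans ?_, z3.le, by linarith⟩, ?_⟩
      · push_cast; linarith
      · rintro rfl
        exact lt_irrefl _ z1
    · push_cast at z2 z3 z4
      have := hm z z1 (H₀ + S) (by positivity)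
      have hm0 : 0 < min z.1 1 := lt_min z1 one_pos
      refine ⟨⟨z1.le, ?_, ?_, by linarith⟩, ?_⟩
      · rcases B.eq_empty_or_nonempty with he | hne
        · rw [hS', he] at z4
          simp at z4
          nlinarith
        · have := hℓ2 hne
          have e : ((ℓ - 1 : ℕ) : ℝ) = ℓ - 1 := by push_cast [this]; ring
          rw [e] at z2
          push_cast
          linarith
      · have := mul_pos (by linarith : (0 : ℝ) < H₀ + 1) hm0
        linarith
      · rintro rfl
        exact lt_irrefl _ z1
    · refine ⟨⟨z1, by push_cast; exact z2, z3.le, z4⟩, ?_⟩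
      rintro rfl
      exact lt_irrefl _ z3

/-- A star pays for itself, including `L + 3` wasted rows, if there are two heavy subtrees or if the
`e` vertices in front of it together with its light subtrees are more than `A`. -/
theorem star_pays {A G G' L : ℕ} (hA : 1 ≤ A) (hG : L + 3 ≤ G) (hG' : 8 * G ≤ G')
    (hS : StarOK T A G) {v : V} {ℓ H e : ℕ} (hℓ : T.sz v ≤ 2 ^ ℓ)
    (hQ : ∀ c ∈ big T A v, Tower T A G' c) (he : 2 ≤ (big T A v).card ∨ A < 1 + lsz T A v + e)
    (hH : 2 * (G' * (T.sz v + e)) ≤ H * A + G' * A + (L + 3) * A) :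
    Draw T v (box (3 * A + ℓ) H) := by
  refine star_heavy hA hS hℓ hQ ?_
  have h1 := sz_split (T := T) A v
  generalize ∑ c ∈ big T A v, T.sz c = x at *
  generalize lsz T A v = s at *
  generalize (big T A v).card = k at *
  rw [h1] at hH
  have e1 : (L + 3) * A ≤ G * A := Nat.mul_le_mul_right _ hG
  have e2 : 8 * G * A ≤ G' * A := Nat.mul_le_mul_right _ hG'
  have e3 : A ≤ G * A := Nat.le_mul_of_pos_left _ (by omega)
  have e4 : 8 * G * s ≤ G' * s := Nat.mul_le_mul_right _ hG'
  have e5 : 2 * (G' * (1 + s + x + e)) = 2 * (G' * (1 + s + e)) + 2 * (G' * x) := by ring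
  have e6 : (s + A) * G = G * s + G * A := by ring
  have e7 : 8 * G * A = 8 * (G * A) := by ring
  have e8 : 8 * G * s = 8 * (G * s) := by ring
  have e9 : G' * (1 + s + e) = G' + G' * s + G' * e := by ring
  rcases Nat.lt_or_ge k 2 with hk | hk
  · have he' : A < 1 + s + e := by omega
    have e10 : G' * A ≤ G' * (1 + s + e) := Nat.mul_le_mul_left _ he'.le
    have e11 : 8 * (G * (1 + s + e)) ≤ G' * (1 + s + e) := by
      rw [← mul_assoc]; exact Nat.mul_le_mul_right _ hG'
    have e12 : G * A ≤ G * (1 + s + e) := Nat.mul_le_mul_left _ he'.le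
    have e13 : G * s ≤ G * (1 + s + e) := Nat.mul_le_mul_left _ (by omega)
    interval_cases k <;> omega
  · obtain ⟨j, rfl⟩ := Nat.exists_eq_add_of_le hk
    have e10 : G' * A * (2 + j) = 2 * (G' * A) + G' * A * j := by ring
    have e11 : 2 * (A * (2 + j)) = 4 * A + 2 * (A * j) := by ring
    have e12 : 2 * (A * j) ≤ G' * A * j := by
      have : 2 * A * j ≤ G' * A * j :=
        Nat.mul_le_mul_right _ (Nat.mul_le_mul_right _ (by omega))
      rw [← mul_assoc]; exact this
    have e13 : 6 * A ≤ 2 * (G * A) := by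
      have : 3 * A ≤ G * A := Nat.mul_le_mul_right _ (by omega)
      omega
    omega

end TreeDraw

namespace TreeDraw

variable {V : Type} [Fintype V] [DecidableEq V] {T : RTree V}

/-- Space for a subtree whose root lies at the origin in a row with `X` free columns to its left and
`s` free columns to its right; below level `L + 2` the whole width `W` is available. -/
def pathZone (L X s W H : ℕ) : Set (ℝ × ℝ) :=
  {z | -(X : ℝ) ≤ z.1 ∧ z.1 ≤ W - X ∧ 0 ≤ z.2 ∧ z.2 ≤ H ∧ (z.2 = 0 → z.1 ≤ 0) ∧
    (z.2 < L + 2 → z.1 ≤ s)}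

/-- The light subtrees below `v` side by side in the row below `v`. -/
theorem lit_row {A L : ℕ} (hA2 : A ≤ 2 ^ L) (v : V) (a : ℕ) :
    Placed T v (lit T A v) (rowZone a (a + lsz T A v) 1 L) := by
  have h := row (lit_subset A v) (fun c => T.sz c - 1) L 1 a le_rfl fun c hc => by
    have h3 := sz_le_of_lit hc
    refine small c L ?_
    have : 2 ^ L < 2 ^ (L + 1) := Nat.pow_lt_pow_right (by norm_num) (by omega)
    omega
  have e : ∑ c ∈ lit T A v, (T.sz c - 1 + 1) = lsz T A v :=
    Finset.sum_congr rfl fun c _ => Nat.sub_add_cancel (T.sz_pos c)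
  rwa [e] at h

theorem big_eq_singleton {A : ℕ} {v : V} (h : (big T A v).card ≤ 1) (hne : big T A v ≠ ∅) :
    ∃ c, big T A v = {c} ∧ T.kids v = lit T A v ∪ {c} ∧ T.sz v = 1 + lsz T A v + T.sz c := by
  obtain ⟨c, hc⟩ := Finset.card_eq_one.1
    (le_antisymm h (Finset.card_pos.2 (Finset.nonempty_iff_ne_empty.2 hne)))
  have h1 := lit_union_big (T := T) A v
  have h2 := sz_split (T := T) A v
  rw [hc] at h1 h2
  rw [Finset.sum_singleton] at h2
  exact ⟨c, hc, h1.symm, h2⟩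

set_option maxHeartbeats 1000000 in
/-- A heavy path continues to the left along the row of `v`, each vertex having its light subtrees
below it, until the free columns are used up or a vertex with two heavy children is reached; that
vertex is placed below the row, in its leftmost free column. Both sides of `hH` decrease by the same
amount at each step to the left, so that at the end of the row all the vertices already drawn in it
are available to pay for the height of the row in `star_pays`. -/
theorem path_row {A G G' L : ℕ} (hA : 1 ≤ A) (hA2 : A ≤ 2 ^ L) (hG : L + 3 ≤ G)
    (hG' : 8 * G ≤ G') (hS : StarOK T A G) {ℓ H : ℕ} (hHL : L + 1 ≤ H) {n : ℕ}
    (hQ : ∀ c, T.sz c < n → Tower T A G' c) (v : V) (X : ℕ) (hvn : T.sz v ≤ n)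
    (hv : (big T A v).card ≤ 1) (hℓ : T.sz v ≤ 2 ^ ℓ) (hX : X + lsz T A v + 1 ≤ A)
    (hH : 2 * (G' * (T.sz v + A)) ≤ (H + 1) * A + G' * A + 2 * (G' * (1 + lsz T A v + X))) :
    Draw T v (pathZone L X (lsz T A v) (3 * A + ℓ) H) := by
  induction hm : T.sz v using Nat.strong_induction_on generalizing v X with
  | _ m ih =>
  subst hm
  have h1 := lit_row (T := T) hA2 v 1
  have hHL' : (L : ℝ) + 1 ≤ H := by exact_mod_cast hHL
  have hX' : (X : ℝ) + lsz T A v + 1 ≤ A := by exact_mod_cast hX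
  have hl0 : (0 : ℝ) ≤ ℓ := Nat.cast_nonneg _
  have hX0 : (0 : ℝ) ≤ X := Nat.cast_nonneg _
  have hL0 : (0 : ℝ) ≤ L := Nat.cast_nonneg _
  have hs0 : (0 : ℝ) ≤ lsz T A v := Nat.cast_nonneg _
  have hrow : ∀ z ∈ rowZone 1 (1 + lsz T A v) 1 L, 0 < z.1 ∧ 0 < z.2 ∧ z.2 ≤ 1 + L ∧
      min z.2 1 ≤ z.1 ∧ z.1 ≤ lsz T A v := by
    rintro z ⟨z1, z2, z3, z4⟩
    push_cast at z2 z3 z4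
    have hm0 : 0 < min z.2 1 := lt_min z1 one_pos
    have hm1 := mul_le_mul_of_nonneg_left (min_le_right z.2 1) hs0
    refine ⟨by linarith, z1, z2, by linarith, by linarith⟩
  have hrow' : ∀ z ∈ rowZone 1 (1 + lsz T A v) 1 L,
      z ∈ pathZone L X (lsz T A v) (3 * A + ℓ) H ∧ z ≠ 0 := by
    intro z hz
    obtain ⟨z1, z2, z3, -, z4⟩ := hrow z hz
    refine ⟨⟨by linarith, by push_cast; linarith, z2.le, by linarith, fun h => absurd h z2.ne',
      fun _ => z4⟩, ?_⟩
    rintro rfl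
    exact lt_irrefl _ z1
  by_cases hb : big T A v = ∅
  · have hk := lit_union_big (T := T) A v
    rw [hb, Finset.union_empty] at hk
    rw [hk] at h1
    exact h1.draw hrow'
  obtain ⟨c, hc, hk, hsz⟩ := big_eq_singleton hv hb
  have hcb : c ∈ big T A v := by rw [hc]; exact Finset.mem_singleton_self c
  have hck : c ∈ T.kids v := big_subset A v hcb
  have hcA := lt_sz_of_big hcb
  suffices hmain : Placed T v {c} {z | -(X : ℝ) ≤ z.1 ∧ z.1 ≤ 3 * A + ℓ - X ∧ 0 ≤ z.2 ∧ z.2 ≤ H ∧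
      (z.2 = 0 → z.1 < 0) ∧ (z.2 < L + 2 → z.1 ≤ 0)} by
    have h2 := h1.union hmain (by rw [← hk]) (by
      rintro z hz ⟨_, _, _, _, _, z6⟩
      obtain ⟨z1, z2, z3, -, z4⟩ := hrow z hz
      linarith [z6 (by linarith)])
    rw [← hk] at h2
    refine h2.draw ?_
    rintro z (hz | ⟨z1, z2, z3, z4, z5, z6⟩)
    · exact hrow' z hz
    · refine ⟨⟨z1, by push_cast; exact z2, z3, z4, fun h => (z5 h).le,
        fun h => (z6 h).trans hs0⟩, ?_⟩
      rintro rfl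
      exact lt_irrefl _ (z5 rfl)
  by_cases hcase : (big T A c).card ≤ 1 ∧ lsz T A c + 1 ≤ X
  · obtain ⟨hc1, hc2⟩ := hcase
    obtain ⟨Y, hY⟩ := Nat.exists_eq_add_of_le hc2
    have h2 := ih (T.sz c) (by omega) c Y (by omega) hc1 (by omega) (by omega) (by
      have e1 : 2 * (G' * (T.sz v + A)) =
        2 * (G' * (T.sz c + A)) + 2 * (G' * (1 + lsz T A v)) := by rw [hsz]; ring
      have e2 : 2 * (G' * (1 + lsz T A v + X)) =
        2 * (G' * (1 + lsz T A c + Y)) + 2 * (G' * (1 + lsz T A v)) := by rw [hY]; ring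
      omega) rfl
    have hYr : (X : ℝ) = lsz T A c + 1 + Y := by exact_mod_cast hY
    have hY0 : (0 : ℝ) ≤ Y := Nat.cast_nonneg _
    have hc0 : (0 : ℝ) ≤ lsz T A c := Nat.cast_nonneg _
    refine Draw.translate hck h2 (-(lsz T A c + 1 : ℤ)) 0 ?_ ?_ ?_
    · rintro z ⟨z1, z2, z3, z4, z5, z6⟩ -
      push_cast at z2 ⊢
      refine ⟨by simp only; linarith, by simp only; linarith, by simpa using z3, by simpa using z4,
        fun h => ?_, fun h => ?_⟩
      · have := z5 (by simpa using h)
        simp only; linarith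
      · have := z6 (by simpa using h)
        simp only; linarith
    · intro t ht0 ht1
      push_cast
      refine ⟨?_, ?_, by simp, by simp, ?_, ?_⟩
      · simp only; nlinarith
      · simp only; nlinarith
      · intro _
        simp only; nlinarith
      · intro _
        simp only; nlinarith
    · rintro z ⟨z1, z2, z3, z4, z5, z6⟩ hz t ht0 ht1 hx hy
      push_cast at hx hy
      have hz2 : z.2 = 0 := by simpa using hy
      have := z5 hz2
      apply hz
      refine Prod.ext ?_ hz2
      simp only [Prod.fst_zero]
      nlinarith
  · have hH1 : L + 2 ≤ H := by
      have e1 : G' * A ≤ G' * T.sz c := Nat.mul_le_mul_left _ hcA.le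
      have e2 : 2 * (G' * (T.sz v + A)) = 2 * (G' * T.sz c) + 2 * (G' * A) +
        2 * (G' * (1 + lsz T A v)) := by rw [hsz]; ring
      have e3 : 2 * (G' * (1 + lsz T A v + X)) = 2 * (G' * (1 + lsz T A v)) + 2 * (G' * X) := by
        ring
      have e4 : G' * X ≤ G' * A := Nat.mul_le_mul_left _ (by omega)
      have e5 : G' * A ≤ (H + 1) * A := by omega
      have := Nat.le_of_mul_le_mul_right e5 hA
      omega
    obtain ⟨H', hH'⟩ := Nat.exists_eq_add_of_le hH1
    obtain ⟨e, he⟩ := Nat.exists_eq_add_of_le (by omega : X ≤ A)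
    have h2 := star_pays (H := H') (ℓ := ℓ) (e := e) hA hG hG' hS (by omega : T.sz c ≤ 2 ^ ℓ)
      (fun d hd => hQ d (by
        have := T.sz_kid_lt (big_subset A c hd)
        omega))
      (by
        by_contra hcon
        push Not at hcon
        exact hcase ⟨by omega, by omega⟩)
      (by
        have e1 : 2 * (G' * (T.sz v + A)) = 2 * (G' * (T.sz c + e)) +
          2 * (G' * (1 + lsz T A v + X)) := by
          rw [(by omega : T.sz v + A = T.sz c + e + (1 + lsz T A v + X))]; ring
        have e2 : (H + 1) * A = H' * A + (L + 3) * A := by rw [hH']; ring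
        omega)
    have hHr : (H : ℝ) = L + 2 + H' := by exact_mod_cast hH'
    have hH0 : (0 : ℝ) ≤ H' := Nat.cast_nonneg _
    refine Draw.translate hck h2 (-(X : ℤ)) (L + 2) ?_ ?_ ?_
    · rintro z ⟨z1, z2, z3, z4⟩ -
      push_cast at z2 ⊢
      refine ⟨by simp only; linarith, by simp only; linarith, by simp only; linarith,
        by simp only; linarith, fun h => ?_, fun h => ?_⟩
      · simp only at h; linarith
      · simp only at h; linarith
    · intro t ht0 ht1
      push_cast
      have p1 : t * X ≤ X := by nlinarith
      have p2 : 0 ≤ t * X := by positivity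
      have p3 : t * (L + 2) ≤ L + 2 := by nlinarith
      have p4 : 0 < t * (L + 2) := by positivity
      exact ⟨by simp only; linarith, by simp only; linarith, p4.le, by simp only; linarith,
        fun h => absurd h p4.ne', fun _ => by simp only; linarith⟩
    · rintro z ⟨z1, z2, z3, z4⟩ hz t ht0 ht1 hx hy
      push_cast at hx hy
      have ht : t = 1 := by
        by_contra hne
        have : t < 1 := lt_of_le_of_ne ht1 hne
        nlinarith
      subst ht
      exact hz (Prod.ext (by simp only [Prod.fst_zero]; linarith)
        (by simp only [Prod.snd_zero]; linarith))

/-- Every subtree of size larger than `A` has the drawing required by `Tower`. A root that cannot pay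
for a star starts a new row: its only heavy child is placed in the row below, as far to the right as
the light subtrees of both vertices allow, and the heavy path runs back towards column `0` by
`path_row`. -/
theorem tower {A G G' L : ℕ} (hA : 1 ≤ A) (hA2 : A ≤ 2 ^ L) (hG : L + 3 ≤ G)
    (hG' : 8 * G ≤ G') (hS : StarOK T A G) (v : V) : Tower T A G' v := by
  induction hm : T.sz v using Nat.strong_induction_on generalizing v with
  | _ m ih =>
  subst hm
  intro ℓ H hℓ hvA hH
  have hQ : ∀ c, T.sz c < T.sz v → Tower T A G' c := fun c hc => ih _ hc c rfl
  have hHG : G' ≤ H := by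
    have e1 : G' * A ≤ G' * T.sz v := Nat.mul_le_mul_left _ hvA.le
    exact Nat.le_of_mul_le_mul_right (by omega : G' * A ≤ H * A) hA
  by_cases hcase : (big T A v).card ≤ 1 ∧ lsz T A v + 1 ≤ A
  swap
  · exact star_pays (e := 0) hA hG hG' hS hℓ
      (fun c hc => hQ c (T.sz_kid_lt (big_subset A v hc))) (by omega)
      (by rw [add_zero]; omega)
  obtain ⟨hv, hvl⟩ := hcase
  have hb : big T A v ≠ ∅ := by
    intro hb
    have := sz_split (T := T) A v
    rw [hb, Finset.sum_empty] at this
    omega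
  obtain ⟨c, hc, hk, hsz⟩ := big_eq_singleton hv hb
  have hcb : c ∈ big T A v := by rw [hc]; exact Finset.mem_singleton_self c
  have hck : c ∈ T.kids v := big_subset A v hcb
  have hcA := lt_sz_of_big hcb
  obtain ⟨X₀, hX₀⟩ := Nat.exists_eq_add_of_le hvl
  have h1 := lit_row (T := T) hA2 v (X₀ + 2)
  have hX₀r : (A : ℝ) = lsz T A v + 1 + X₀ := by exact_mod_cast hX₀
  have hl0 : (0 : ℝ) ≤ ℓ := Nat.cast_nonneg _
  have hX0 : (0 : ℝ) ≤ X₀ := Nat.cast_nonneg _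
  have hL0 : (0 : ℝ) ≤ L := Nat.cast_nonneg _
  have hs0 : (0 : ℝ) ≤ lsz T A v := Nat.cast_nonneg _
  have hHL : (L : ℝ) + 3 ≤ H := by exact_mod_cast (by omega : L + 3 ≤ H)
  have hrow : ∀ z ∈ rowZone (X₀ + 2) (X₀ + 2 + lsz T A v) 1 L, 0 < z.2 ∧ z.2 ≤ 1 + L ∧
      (X₀ + 2) * min z.2 1 ≤ z.1 ∧ z.1 ≤ A := by
    rintro z ⟨z1, z2, z3, z4⟩
    push_cast at z2 z3 z4
    have hm1 := mul_le_mul_of_nonneg_left (min_le_right z.2 1)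
      (by linarith : (0 : ℝ) ≤ X₀ + 2 + lsz T A v - 1)
    refine ⟨z1, by linarith, by linarith, by linarith⟩
  suffices hmain : Placed T v {c} {z | 0 ≤ z.1 ∧ z.1 ≤ 3 * A + ℓ ∧ 0 < z.2 ∧ z.2 ≤ H ∧
      (z.2 < L + 3 → z.1 ≤ X₀ * min z.2 1)} by
    have hm0 : ∀ z : ℝ × ℝ, 0 < z.2 → 0 < min z.2 1 := fun z hz => lt_min hz one_pos
    have h2 := h1.union hmain (by rw [← hk]) (by
      rintro z hz ⟨_, _, _, _, z6⟩
      obtain ⟨z1, z2, z3, -⟩ := hrow z hz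
      have := hm0 z z1
      linarith [z6 (by linarith)])
    rw [← hk] at h2
    refine h2.draw ?_
    rintro z (hz | ⟨z1, z2, z3, z4, z5⟩)
    · obtain ⟨z1, z2, z3, z4⟩ := hrow z hz
      have := mul_pos (by linarith : (0 : ℝ) < X₀ + 2) (hm0 z z1)
      refine ⟨⟨by linarith, by push_cast; linarith, z1.le, by linarith⟩, ?_⟩
      rintro rfl
      exact lt_irrefl _ z1
    · refine ⟨⟨z1, by push_cast; exact z2, z3.le, z4⟩, ?_⟩
      rintro rfl
      exact lt_irrefl _ z3
  by_cases hcase : (big T A c).card ≤ 1 ∧ lsz T A c + 1 ≤ X₀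
  · obtain ⟨hc1, hc2⟩ := hcase
    obtain ⟨X, hX⟩ := Nat.exists_eq_add_of_le hc2
    obtain ⟨H', hH'⟩ := Nat.exists_eq_add_of_le (by omega : 1 ≤ H)
    have h2 := path_row (H := H') (ℓ := ℓ) hA hA2 hG hG' hS (by omega) hQ c X (by omega) hc1
      (by omega) (by omega) (by
        have e1 : 2 * (G' * (T.sz c + A)) = 2 * (G' * T.sz v) +
            2 * (G' * (1 + lsz T A c + X)) := by
          rw [(by omega : T.sz c + A = T.sz v + (1 + lsz T A c + X))]; ring
        have e2 : (H' + 1) * A = H * A := by rw [hH']; ring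
        omega)
    have hXr : (X₀ : ℝ) = lsz T A c + 1 + X := by exact_mod_cast hX
    have hHr : (H : ℝ) = 1 + H' := by exact_mod_cast hH'
    have hY0 : (0 : ℝ) ≤ X := Nat.cast_nonneg _
    have hc0 : (0 : ℝ) ≤ lsz T A c := Nat.cast_nonneg _
    refine Draw.translate_down hck h2 X 1 le_rfl (fun z hz => hz.2.2.1) ?_ ?_
    · rintro z ⟨z1, z2, z3, z4, z5, z6⟩ -
      push_cast at z2 ⊢
      refine ⟨by simp only; linarith, by simp only; linarith, by simp only; linarith,
        by simp only; linarith, fun h => ?_⟩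
      simp only at h ⊢
      have := z6 (by linarith)
      rw [min_eq_right (by linarith)]
      linarith
    · intro t ht0 ht1
      push_cast
      have p1 : t * X ≤ X := by nlinarith
      have p2 : 0 ≤ t * X := by positivity
      refine ⟨p2, by simp only; linarith, by simpa using ht0, by simp only; linarith, fun _ => ?_⟩
      simp only [mul_one]
      rw [min_eq_left ht1]
      nlinarith
  · obtain ⟨H', hH'⟩ := Nat.exists_eq_add_of_le (by omega : L + 3 ≤ H)
    have h2 := star_pays (H := H') (ℓ := ℓ) (e := 1 + lsz T A v) hA hG hG' hS
      (by omega : T.sz c ≤ 2 ^ ℓ)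
      (fun d hd => hQ d (by
        have := T.sz_kid_lt (big_subset A c hd)
        omega))
      (by
        by_contra hcon
        push Not at hcon
        exact hcase ⟨by omega, by omega⟩)
      (by
        have e1 : T.sz c + (1 + lsz T A v) = T.sz v := by omega
        have e2 : H * A = H' * A + (L + 3) * A := by rw [hH']; ring
        rw [e1]
        omega)
    have hHr : (H : ℝ) = L + 3 + H' := by exact_mod_cast hH'
    have hH0 : (0 : ℝ) ≤ H' := Nat.cast_nonneg _
    refine Draw.translate_down hck h2 0 (L + 3) (by omega) (fun z hz => hz.2.2.1) ?_ ?_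
    · rintro z ⟨z1, z2, z3, z4⟩ -
      push_cast at z2 ⊢
      refine ⟨by simp only; linarith, by simp only; linarith, by simp only; linarith,
        by simp only; linarith, fun h => ?_⟩
      simp only at h
      linarith
    · intro t ht0 ht1
      push_cast
      have p3 : t * (L + 3) ≤ L + 3 := by nlinarith
      have p4 : 0 < t * (L + 3) := by positivity
      refine ⟨by simp, by simp only [mul_zero]; positivity, p4, by simp only; linarith, fun _ => ?_⟩
      have := mul_nonneg hX0 (lt_min p4 one_pos).le
      simpa using this

/-- One level of the recursion: boxes of width `4 A` for all `A ≤ b w`. -/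
theorem good_step {L w F b : ℕ} (hL : 2 ≤ L) (hb : 4 ≤ b) (hF : b * L ≤ F) (hP : Good T L w F) :
    Good T L (b * w) (12583040 * (L ^ 2 * F)) := by
  intro v A H hA hAw hA2 hv hH
  have hS : StarOK T A (786440 * (L ^ 2 * F)) := by
    intro v K s H hK hKs hs hH
    refine star hL hb hF hP hA hAw hA2 hK hKs hs (le_trans (le_of_eq ?_) hH)
    ring
  have hLF : L ≤ L ^ 2 * F := by
    have h1 : L ≤ F := by nlinarith
    have h2 : F ≤ L ^ 2 * F := Nat.le_mul_of_pos_left _ (by positivity)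
    omega
  have e : 12583040 * (L ^ 2 * F) = 2 * (6291520 * (L ^ 2 * F)) := by ring
  rw [e] at hH
  set G' := 6291520 * (L ^ 2 * F) with hG'
  have hHL : L ≤ H := by
    have h1 : G' * A ≤ (T.sz v + A) * (2 * G') := by nlinarith
    have := Nat.le_of_mul_le_mul_right (h1.trans hH) (by omega)
    omega
  by_cases hvA : T.sz v ≤ A
  · have : 2 ^ L < 2 ^ (L + 1) := Nat.pow_lt_pow_right (by norm_num) (by omega)
    exact (small v L (by omega)).mono (box_mono (by omega) hHL)
  · have ht := tower (G' := G') (by omega) hA2 (by omega) (by omega) hS v A H hv (by omega)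
      (le_trans (by nlinarith) (hH.trans (Nat.le_add_right _ _)))
    exact ht.mono (box_mono (by omega) le_rfl)

end TreeDraw

namespace TreeDraw

variable {V : Type} [Fintype V] [DecidableEq V] {T : RTree V}

/-- Starting from width `1`, where there is nothing to draw, `j` levels of the recursion reach width
`b ^ j`. -/
theorem good_iterate {L b : ℕ} (hL : 2 ≤ L) (hb : 4 ≤ b) (j : ℕ) :
    b * L ≤ (12583040 * L ^ 2) ^ j * (b * L) ∧
      Good T L (b ^ j) ((12583040 * L ^ 2) ^ j * (b * L)) := by
  induction j with
  | zero =>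
    refine ⟨by simp, fun v A H hA hAw => ?_⟩
    -- no `A` satisfies `2 ≤ L ≤ A ≤ 1`
    rw [pow_zero] at hAw
    omega
  | succ j ih =>
    refine ⟨Nat.le_mul_of_pos_left _ (by positivity), ?_⟩
    have := good_step hL hb ih.1 ih.2
    convert this using 1 <;> ring

/-! ### From rooted trees to graphs -/

/-- The rooted tree obtained from a tree graph by choosing a root and directing each edge towards
it; every edge of the graph joins a vertex to its parent. -/
theorem exists_rtree {V : Type} [Fintype V] {G : SimpleGraph V} (hG : G.IsTree) :
    ∃ T : RTree V, ∀ u v, G.Adj u v →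
      ∃ a, a ≠ T.root ∧ ((u = a ∧ v = T.par a) ∨ (v = a ∧ u = T.par a)) := by
  classical
  obtain ⟨r⟩ := hG.connected.nonempty
  have hpar : ∀ v, ∃ u, (v = r → u = r) ∧ (v ≠ r → G.Adj v u ∧ G.dist u r < G.dist v r) := by
    intro v
    by_cases hv : v = r
    · exact ⟨r, fun _ => rfl, fun h => absurd hv h⟩
    · obtain ⟨p, hp⟩ := hG.connected.exists_walk_length_eq_dist v r
      cases p with
      | nil => exact absurd rfl hv
      | cons h q =>
        rename_i u
        refine ⟨u, fun h => absurd h hv, fun _ => ⟨h, ?_⟩⟩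
        have := SimpleGraph.dist_le q
        rw [SimpleGraph.Walk.length_cons] at hp
        omega
  choose par hpar1 hpar2 using hpar
  refine ⟨⟨r, par, fun v => G.dist v r, hpar1 r rfl, fun v hv => (hpar2 v hv).2⟩, ?_⟩
  have hcard := hG.card_edgeFinset
  set E := (Finset.univ.erase r).image fun v => s(v, par v) with hE
  have hinj : Set.InjOn (fun v => s(v, par v)) (Finset.univ.erase r : Finset V) := by
    intro v hv w hw h
    have h1 := (hpar2 v (Finset.ne_of_mem_erase hv)).2
    have h2 := (hpar2 w (Finset.ne_of_mem_erase hw)).2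
    rcases Sym2.eq_iff.1 h with ⟨h3, -⟩ | ⟨h3, h4⟩
    · exact h3
    · rw [← h3] at h2
      rw [h4] at h1
      omega
  have hsub : E ⊆ G.edgeFinset := by
    intro e he
    obtain ⟨v, hv, rfl⟩ := Finset.mem_image.1 he
    rw [SimpleGraph.mem_edgeFinset]
    exact (hpar2 v (Finset.ne_of_mem_erase hv)).1
  have hEc : E.card + 1 = Fintype.card V := by
    rw [hE, Finset.card_image_of_injOn hinj, Finset.card_erase_add_one (Finset.mem_univ r),
      Finset.card_univ]
  have hEq : E = G.edgeFinset := Finset.eq_of_subset_of_card_le hsub (by omega)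
  intro u v huv
  have : s(u, v) ∈ E := by
    rw [hEq, SimpleGraph.mem_edgeFinset]
    exact huv
  obtain ⟨a, ha, he⟩ := Finset.mem_image.1 this
  refine ⟨a, Finset.ne_of_mem_erase ha, ?_⟩
  rcases Sym2.eq_iff.1 he with ⟨h3, h4⟩ | ⟨h3, h4⟩
  · exact Or.inl ⟨h3.symm, h4.symm⟩
  · exact Or.inr ⟨h3.symm, h4.symm⟩

theorem desc_root : T.desc T.root = Finset.univ := by
  refine Finset.eq_univ_of_forall fun w => ?_
  induction hd : T.dep w using Nat.strong_induction_on generalizing w with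
  | _ d ih =>
  by_cases hw : w = T.root
  · rw [hw]; exact T.self_mem _
  · have h1 := T.dep_par w hw
    obtain ⟨k, hk⟩ := T.mem_desc.1 (ih _ (hd ▸ h1) (T.par w) rfl)
    exact T.mem_desc.2 ⟨k + 1, by rwa [Function.iterate_succ_apply]⟩

theorem segment_eq (a b : ℝ × ℝ) : segment ℝ a b = piece a b ∪ {a} := by
  rw [segment_eq_image']
  ext z
  constructor
  · rintro ⟨t, ⟨h0, h1⟩, rfl⟩
    rcases h0.eq_or_lt with h | h
    · exact Or.inr (by simp [← h])
    · exact Or.inl ⟨t, h, h1, rfl⟩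
  · rintro (⟨t, h0, h1, rfl⟩ | h)
    · exact ⟨t, ⟨h0.le, h1⟩, rfl⟩
    · exact ⟨0, ⟨le_rfl, zero_le_one⟩, by simpa using h.symm⟩

omit [Fintype V] in
/-- Disjointness of the half-open edges, and of the root from all of them, is planarity. -/
theorem straightLine {G : SimpleGraph V} (hT : ∀ u v, G.Adj u v →
    ∃ a, a ≠ T.root ∧ ((u = a ∧ v = T.par a) ∨ (v = a ∧ u = T.par a))) {g : V → ℝ × ℝ}
    (h1 : ∀ w, w ≠ T.root → g T.root ∉ piece (g (T.par w)) (g w))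
    (h2 : ∀ w, w ≠ T.root → ∀ w', w' ≠ T.root → w ≠ w' →
      Disjoint (piece (g (T.par w)) (g w)) (piece (g (T.par w')) (g w'))) :
    IsStraightLineDrawing G g := by
  -- the half-open edge above `a` contains no vertex but `a`
  have key : ∀ a, a ≠ T.root → ∀ w, g w ∈ piece (g (T.par a)) (g a) → w = a := by
    intro a ha w hw
    by_contra hne
    by_cases hr : w = T.root
    · exact h1 a ha (hr ▸ hw)
    · exact Set.disjoint_left.1 (h2 w hr a ha hne) (right_mem_piece _ _) hw
  have hinj : Function.Injective g := by
    intro u v huv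
    by_cases hu : u = T.root
    · by_cases hv : v = T.root
      · rw [hu, hv]
      · exact key v hv u (huv ▸ right_mem_piece _ _)
    · exact (key u hu v (huv ▸ right_mem_piece _ _)).symm
  have hseg : ∀ u v, G.Adj u v → ∃ a, a ≠ T.root ∧
      segment ℝ (g u) (g v) = piece (g (T.par a)) (g a) ∪ {g (T.par a)} ∧
      (∀ w, (w = u ∨ w = v) ↔ (w = a ∨ w = T.par a)) ∧ s(u, v) = s(a, T.par a) := by
    intro u v huv
    obtain ⟨a, ha, ⟨rfl, rfl⟩ | ⟨rfl, rfl⟩⟩ := hT u v huv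
    · exact ⟨u, ha, by rw [segment_symm, segment_eq], fun w => Iff.rfl, rfl⟩
    · exact ⟨v, ha, segment_eq _ _, fun w => or_comm, Sym2.eq_swap⟩
  refine ⟨hinj, ?_, ?_⟩
  · intro u v w huv hwu hwv hw
    obtain ⟨a, ha, hs, he, -⟩ := hseg u v huv
    have hn : ¬ (w = a ∨ w = T.par a) := fun h => by
      rcases (he w).2 h with h | h
      · exact hwu h
      · exact hwv h
    rw [hs] at hw
    rcases hw with hw | hw
    · exact hn (Or.inl (key a ha w hw))
    · exact hn (Or.inr (hinj hw))
  · intro u v u' v' huv huv' hne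
    obtain ⟨a, ha, hs, he, hsy⟩ := hseg u v huv
    obtain ⟨b, hb, hs', he', hsy'⟩ := hseg u' v' huv'
    have hab : a ≠ b := by
      rintro rfl
      exact hne (hsy.trans hsy'.symm)
    simp only [he, he']
    rw [hs, hs']
    ext z
    constructor
    · rintro ⟨hz | hz, hz' | hz'⟩
      · exact absurd hz' (Set.disjoint_left.1 (h2 a ha b hb hab) hz)
      · rw [Set.mem_singleton_iff] at hz'
        subst hz'
        exact ⟨_, ⟨Or.inl (key a ha _ hz), Or.inr rfl⟩, rfl⟩
      · rw [Set.mem_singleton_iff] at hz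
        subst hz
        exact ⟨_, ⟨Or.inr rfl, Or.inl (key b hb _ hz')⟩, rfl⟩
      · rw [Set.mem_singleton_iff] at hz hz'
        exact ⟨_, ⟨Or.inr rfl, Or.inr (hinj (hz.symm.trans hz'))⟩, hz.symm⟩
    · rintro ⟨w, ⟨hw, hw'⟩, rfl⟩
      constructor
      · rcases hw with rfl | rfl
        · exact Or.inl (right_mem_piece _ _)
        · exact Or.inr rfl
      · rcases hw' with rfl | rfl
        · exact Or.inl (right_mem_piece _ _)
        · exact Or.inr rfl

/-- A drawing of the subtree at the root, shifted by `(1, 1)`, is a grid drawing of the graph. -/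
theorem Draw.grid {G : SimpleGraph V} (hT : ∀ u v, G.Adj u v →
    ∃ a, a ≠ T.root ∧ ((u = a ∧ v = T.par a) ∨ (v = a ∧ u = T.par a))) {W H : ℕ}
    (h : Draw T T.root (box W H)) :
    ∃ f : V → ℝ × ℝ, IsGridDrawing G f (W + 1) (H + 1) := by
  obtain ⟨f, f0, fi, fd⟩ := h
  have hmem : ∀ w, w ≠ T.root → w ∈ (T.kids T.root).biUnion T.desc := by
    intro w hw
    have h1 : w ∈ T.desc T.root := by rw [desc_root]; exact Finset.mem_univ w
    rw [T.desc_eq, Finset.mem_insert] at h1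
    exact h1.resolve_left hw
  have htr : ∀ a b z : ℝ × ℝ, z ∈ piece (a + (1, 1)) (b + (1, 1)) ↔ z - (1, 1) ∈ piece a b := by
    intro a b z
    simp only [piece, Set.mem_ofPred_eq, add_sub_add_right_eq_sub, sub_eq_iff_eq_add]
    refine exists_congr fun t => and_congr_right fun _ => and_congr_right fun _ => ?_
    rw [add_right_comm]
  refine ⟨fun w => f w + (1, 1), straightLine hT ?_ ?_, ?_⟩
  · intro w hw hr
    rw [htr, add_sub_cancel_right, f0] at hr
    exact ((fi w (hmem w hw)).2 hr).2 rfl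
  · intro w hw w' hw' hne
    rw [Set.disjoint_left]
    intro z hz hz'
    rw [htr] at hz hz'
    exact Set.disjoint_left.1 (fd w (hmem w hw) w' (hmem w' hw') hne) hz hz'
  · intro w
    have hbox : IsInt (f w) ∧ f w ∈ box W H := by
      by_cases hw : w = T.root
      · rw [hw, f0]
        exact ⟨⟨0, 0, by ext <;> simp⟩, by simp [box]⟩
      · exact ⟨(fi w (hmem w hw)).1, ((fi w (hmem w hw)).2 (right_mem_piece _ _)).1⟩
    obtain ⟨⟨i, j, hij⟩, b1, b2, b3, b4⟩ := hbox
    rw [hij] at b1 b2 b3 b4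
    simp only at b1 b2 b3 b4
    have c1 : 0 ≤ i := by exact_mod_cast b1
    have c2 : i ≤ W := by exact_mod_cast b2
    have c3 : 0 ≤ j := by exact_mod_cast b3
    have c4 : j ≤ H := by exact_mod_cast b4
    refine ⟨i + 1, j + 1, by omega, by push_cast; omega, by omega, by push_cast; omega, ?_⟩
    beta_reduce
    rw [hij]
    push_cast
    rfl

/-! ### Choice of the parameters -/

/-- With `b = 2 ^ k` and `k ≈ √(log A log log A)`, about `√(log A / log log A)` levels of the
recursion reach width `A`; each of them costs a factor `O(log ^ 2 A)` in height. -/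
theorem parameters {A : ℕ} (hA : 4 ≤ A) : ∃ L b J : ℕ, 2 ≤ L ∧ 4 ≤ b ∧ L ≤ A ∧ A ≤ 2 ^ L ∧
    A ≤ b ^ J ∧ (((12583040 * L ^ 2) ^ J * (b * L) : ℕ) : ℝ) ≤
      (2 : ℝ) ^ (60 * Real.sqrt (Real.logb 2 A * Real.logb 2 (Real.logb 2 A))) ∧
    1 ≤ Real.sqrt (Real.logb 2 A * Real.logb 2 (Real.logb 2 A)) := by
  have h2 : (1 : ℝ) < 2 := by norm_num
  have h0 : (0 : ℝ) < 2 := by norm_num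
  have hA4 : (4 : ℝ) ≤ A := by exact_mod_cast hA
  set x := Real.logb 2 A with hx
  set y := Real.logb 2 x with hy
  set R := Real.sqrt (x * y) with hR
  have hxA : (2 : ℝ) ^ x = A := Real.rpow_logb h0 (by norm_num) (by linarith)
  have hx2 : 2 ≤ x := by
    rw [hx, Real.le_logb_iff_rpow_le h2 (by linarith)]
    norm_num
    exact_mod_cast hA
  have hyx : (2 : ℝ) ^ y = x := Real.rpow_logb h0 (by norm_num) (by linarith)
  have hy1 : 1 ≤ y := by
    rw [hy, Real.le_logb_iff_rpow_le h2 (by linarith), Real.rpow_one]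
    exact hx2
  have hlog : ∀ m : ℕ, (m : ℝ) ≤ (2 : ℝ) ^ (m : ℝ) := fun m => by
    rw [Real.rpow_natCast]
    exact_mod_cast Nat.lt_two_pow_self.le
  have hyx' : y ≤ x := by
    have h3 := Real.add_one_le_exp (x * Real.log 2)
    have h4 : (2 : ℝ) ^ x = Real.exp (x * Real.log 2) := by
      rw [Real.rpow_def_of_pos h0, mul_comm]
    have h5 := Real.log_two_gt_d9
    rw [hy, Real.logb_le_iff_le_rpow h2 (by linarith)]
    -- Bernoulli's inequality for the exponent `x ≥ 2`
    have h6 := one_add_mul_self_le_rpow_one_add (s := 1) (by norm_num) (by linarith : 1 ≤ x)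
    norm_num at h6
    linarith
  have hRsq : R * R = x * y := Real.mul_self_sqrt (by nlinarith)
  have hR0 : 0 ≤ R := Real.sqrt_nonneg _
  have hRy : y ≤ R := Real.le_sqrt_of_sq_le (by nlinarith)
  have hR1 : 1 < R := by
    by_contra h
    push Not at h
    nlinarith
  have hRp : 0 < R := by linarith
  refine ⟨⌈x⌉₊, 2 ^ ⌈R⌉₊, ⌈x / R⌉₊, ?_, ?_, ?_, ?_, ?_, ?_, hR1.le⟩
  · have : (2 : ℝ) ≤ ⌈x⌉₊ := hx2.trans (Nat.le_ceil x)
    exact_mod_cast this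
  · have : 1 < ⌈R⌉₊ := Nat.lt_ceil.2 (by exact_mod_cast hR1)
    calc 4 = 2 ^ 2 := rfl
      _ ≤ 2 ^ ⌈R⌉₊ := Nat.pow_le_pow_right (by norm_num) this
  · refine Nat.ceil_le.2 ?_
    rw [hx, Real.logb_le_iff_le_rpow h2 (by linarith)]
    exact hlog A
  · have : (A : ℝ) ≤ (2 : ℝ) ^ (⌈x⌉₊ : ℝ) := by
      rw [← hxA]
      exact Real.rpow_le_rpow_of_exponent_le h2.le (Nat.le_ceil x)
    rw [Real.rpow_natCast] at this
    exact_mod_cast this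
  · have : (A : ℝ) ≤ (2 : ℝ) ^ ((⌈R⌉₊ * ⌈x / R⌉₊ : ℕ) : ℝ) := by
      rw [← hxA]
      refine Real.rpow_le_rpow_of_exponent_le h2.le ?_
      push_cast
      calc x = R * (x / R) := by field_simp
        _ ≤ ⌈R⌉₊ * ⌈x / R⌉₊ := mul_le_mul (Nat.le_ceil R) (Nat.le_ceil _)
          (div_nonneg (by linarith) hR0) (Nat.cast_nonneg _)
    rw [Real.rpow_natCast] at this
    rw [← pow_mul]
    exact_mod_cast this
  · have hLr : (⌈x⌉₊ : ℝ) ≤ (2 : ℝ) ^ (2 * y) := by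
      have h3 : (⌈x⌉₊ : ℝ) < x + 1 := Nat.ceil_lt_add_one (by linarith)
      have h4 : (2 : ℝ) ^ (2 * y) = x * x := by
        rw [two_mul, Real.rpow_add h0, hyx]
      rw [h4]
      nlinarith
    have hJ : (⌈x / R⌉₊ : ℝ) < x / R + 1 := Nat.ceil_lt_add_one (div_nonneg (by linarith) hR0)
    have hk : (⌈R⌉₊ : ℝ) < R + 1 := Nat.ceil_lt_add_one hR0
    have hκ : (12583040 * (⌈x⌉₊ : ℝ) ^ 2) ≤ (2 : ℝ) ^ (28 * y) := by
      have h3 : (2 : ℝ) ^ (28 * y) = (2 : ℝ) ^ (24 * y) * ((2 : ℝ) ^ (2 * y)) ^ 2 := by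
        rw [← Real.rpow_natCast, ← Real.rpow_mul h0.le, ← Real.rpow_add h0]
        congr 1
        push_cast
        ring
      rw [h3]
      refine mul_le_mul ?_ (pow_le_pow_left₀ (Nat.cast_nonneg _) hLr 2) (by positivity)
        (by positivity)
      calc (12583040 : ℝ) ≤ (2 : ℝ) ^ (24 : ℝ) := by norm_num
        _ ≤ (2 : ℝ) ^ (24 * y) := Real.rpow_le_rpow_of_exponent_le h2.le (by linarith)
    push_cast
    calc (12583040 * (⌈x⌉₊ : ℝ) ^ 2) ^ ⌈x / R⌉₊ * (2 ^ ⌈R⌉₊ * (⌈x⌉₊ : ℝ))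
        ≤ ((2 : ℝ) ^ (28 * y)) ^ ⌈x / R⌉₊ * (2 ^ ⌈R⌉₊ * (2 : ℝ) ^ (2 * y)) := by gcongr
      _ = (2 : ℝ) ^ (28 * y * ⌈x / R⌉₊ + (⌈R⌉₊ + 2 * y)) := by
        rw [← Real.rpow_natCast, ← Real.rpow_mul h0.le, ← Real.rpow_natCast 2 ⌈R⌉₊,
          ← Real.rpow_add h0, ← Real.rpow_add h0]
      _ ≤ (2 : ℝ) ^ (60 * R) := by
        refine Real.rpow_le_rpow_of_exponent_le h2.le ?_
        have h3 : y * (x / R) = R := by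
          rw [← mul_div_assoc, mul_comm y x, ← hRsq]
          field_simp
        have h4 : y * ⌈x / R⌉₊ ≤ y * (x / R + 1) := mul_le_mul_of_nonneg_left hJ.le (by linarith)
        linarith

end TreeDraw

/-- Corollary: every tree of size `n` has a straight-line grid drawing of width `O(A)` and
height `(n/A)·2^{O(√(log A · log log A))}`, for any `log n ≤ A ≤ n`. -/
theorem stmt10 : ∃ C : ℝ, 0 < C ∧
    ∀ (n A : ℕ), 16 ≤ n → Real.logb 2 n ≤ (A : ℝ) → A ≤ n →
    ∀ (V : Type) [Fintype V] (G : SimpleGraph V), G.IsTree → Fintype.card V = n →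
    ∃ (W H : ℕ) (f : V → ℝ × ℝ), IsGridDrawing G f W H ∧
      (W : ℝ) ≤ C * A ∧
      (H : ℝ) ≤ ((n : ℝ) / A) *
        (2 : ℝ) ^ (C * Real.sqrt (Real.logb 2 A * Real.logb 2 (Real.logb 2 A))) := by
  refine ⟨62, by norm_num, ?_⟩
  intro n A hn hlog hAn V _ G hG hcard
  classical
  have hnA : n ≤ 2 ^ A := by
    have hn0 : (0 : ℝ) < n := by exact_mod_cast (by omega : 0 < n)
    rw [Real.logb_le_iff_le_rpow (by norm_num) hn0, Real.rpow_natCast] at hlog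
    exact_mod_cast hlog
  have hA4 : 4 ≤ A := by
    by_contra h
    have : 2 ^ A ≤ 2 ^ 3 := Nat.pow_le_pow_right (by norm_num) (by omega)
    omega
  obtain ⟨L, b, J, hL, hb, hLA, hA2, hAb, hF, hR⟩ := TreeDraw.parameters hA4
  obtain ⟨T, hT⟩ := TreeDraw.exists_rtree hG
  have hgood := TreeDraw.good_iterate (T := T) hL hb J
  have hF1 : 1 ≤ (12583040 * L ^ 2) ^ J * (b * L) := by
    have : 1 ≤ b * L := Nat.mul_pos (by omega) (by omega)
    exact this.trans hgood.1
  generalize (12583040 * L ^ 2) ^ J * (b * L) = F at *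
  generalize Real.sqrt (Real.logb 2 A * Real.logb 2 (Real.logb 2 A)) = R at *
  have hsz : T.sz T.root = n := by
    rw [TreeDraw.RTree.sz, TreeDraw.desc_root, Finset.card_univ, hcard]
  set H := (n + A) * F / A + 1 with hH
  have h1 : (n + A) * F ≤ H * A := by
    rw [mul_comm H]
    exact (Nat.lt_mul_div_succ _ (by omega)).le
  have h2 : (H + 1) * A ≤ 4 * (n * F) := by
    have e1 : (n + A) * F / A * A ≤ (n + A) * F := Nat.div_mul_le_self _ _
    have e2 : A * F ≤ n * F := Nat.mul_le_mul_right _ hAn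
    have e3 : A ≤ A * F := Nat.le_mul_of_pos_right _ hF1
    have e4 : (n + A) * F = n * F + A * F := add_mul _ _ _
    have e5 : (H + 1) * A = (n + A) * F / A * A + 2 * A := by rw [hH]; ring
    omega
  have hd := hgood.2 T.root A H hLA hAb hA2 (by rw [hsz]; exact hnA) (by rw [hsz]; exact h1)
  obtain ⟨f, hf⟩ := hd.grid hT
  refine ⟨_, _, f, hf, ?_, ?_⟩
  · have : (1 : ℝ) ≤ A := by exact_mod_cast (by omega : 1 ≤ A)
    push_cast
    linarith
  · have hA0 : (0 : ℝ) < A := by exact_mod_cast (by omega : 0 < A)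
    have h3 : ((H : ℝ) + 1) * A ≤ 4 * (n * F) := by exact_mod_cast h2
    have h4 : (4 : ℝ) * F ≤ (2 : ℝ) ^ (62 * R) := by
      have e1 : (2 : ℝ) ^ (62 * R) = (2 : ℝ) ^ (2 * R) * (2 : ℝ) ^ (60 * R) := by
        rw [← Real.rpow_add (by norm_num)]
        congr 1
        ring
      have e2 : (4 : ℝ) ≤ (2 : ℝ) ^ (2 * R) := by
        calc (4 : ℝ) = (2 : ℝ) ^ (2 : ℝ) := by norm_num
          _ ≤ _ := Real.rpow_le_rpow_of_exponent_le (by norm_num) (by linarith)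
      rw [e1]
      exact mul_le_mul e2 hF (Nat.cast_nonneg _) (by positivity)
    rw [div_mul_eq_mul_div, le_div_iff₀ hA0]
    push_cast
    calc ((H : ℝ) + 1) * A ≤ n * (4 * F) := by linarith
      _ ≤ _ := mul_le_mul_of_nonneg_left h4 (Nat.cast_nonneg _)
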